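/- arXiv:2507.16107 — 13 statements merged into one kernel-verified Lean document; each statement's English description precedes it below -/
import Mathlib

section
/- Let H be a PM-ID compatible pattern DAG with vertex set Ṽ ⊆ {0,1}^K, and let p and q be two full laws such that (i) p(X = x, O = o, R = r) > 0 and q(X = x, O = o, R = r) > 0 for every pattern r ∈ Ṽ and all values x, o; (ii) p and q have the same observed law; and (iii) every labeled edge of H is valid for both p and q. Then p(X = x, O = o, R = r) = q(X = x, O = o, R = r) for every pattern r ∈ Ṽ and all values x, o. (Identifiability form of the PM-ID algorithm: the full law at every pattern in Ṽ is determined by the observed law.) -/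
/-- Identifiability form of the PM-ID algorithm: given a PM-ID compatible
pattern DAG `H = (Vt, E)`, two full laws that are positive on every pattern in `Vt`,
have the same observed law, and for which every labeled edge of `H` is valid, agree
at every pattern in `Vt`. -/
theorem pm_id_identifiability
    (K : ℕ) (hK : 1 ≤ K)
    (𝒳 : Fin K → Type) [∀ i, Fintype (𝒳 i)] [∀ i, Nonempty (𝒳 i)]
    [∀ i, DecidableEq (𝒳 i)]
    (𝒪 : Type) [Fintype 𝒪] [Nonempty 𝒪]
    (p q : (∀ i, 𝒳 i) → 𝒪 → (Fin K → Bool) → ℝ)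
    -- `p` and `q` are probability mass functions (full laws)
    (hp_nonneg : ∀ x o r, 0 ≤ p x o r)
    (hp_sum : ∑ x : ∀ i, 𝒳 i, ∑ o : 𝒪, ∑ r : Fin K → Bool, p x o r = 1)
    (hq_nonneg : ∀ x o r, 0 ≤ q x o r)
    (hq_sum : ∑ x : ∀ i, 𝒳 i, ∑ o : 𝒪, ∑ r : Fin K → Bool, q x o r = 1)
    -- a pattern DAG `H` with vertex set `Vt ⊆ {0,1}^K` and labeled edges `E r̃ i r`
    (Vt : Set (Fin K → Bool))
    (E : (Fin K → Bool) → Fin K → (Fin K → Bool) → Prop)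
    (hE_vert : ∀ r' i r, E r' i r → r' ∈ Vt ∧ r ∈ Vt ∧ r' ≠ r)
    (hE_acyclic : ∀ r, ¬ Relation.TransGen (fun a b => ∃ i, E a i b) r r)
    -- PM-ID compatibility (I1): the complete case pattern is a root vertex of `H`
    (hI1_mem : (fun _ => true) ∈ Vt)
    (hI1_root : ∀ r' i, ¬ E r' i (fun _ => true))
    -- PM-ID compatibility (I2): for every `r ∈ Vt` and `i ∈ M(r)` there is a directed
    -- path from the complete case pattern to `r` whose last edge is labeled `i`
    (hI2 : ∀ r ∈ Vt, ∀ i : Fin K, r i = false →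
      ∃ r', E r' i r ∧
        Relation.ReflTransGen (fun a b => ∃ j, E a j b) (fun _ => true) r')
    -- (i) positivity at every pattern in `Vt`
    (hp_pos : ∀ r ∈ Vt, ∀ (x : ∀ i, 𝒳 i) (o : 𝒪), 0 < p x o r)
    (hq_pos : ∀ r ∈ Vt, ∀ (x : ∀ i, 𝒳 i) (o : 𝒪), 0 < q x o r)
    -- (ii) `p` and `q` have the same observed law
    (h_obs : ∀ (r : Fin K → Bool) (o : 𝒪) (x : ∀ i, 𝒳 i),
      (∑ x' : ∀ i, 𝒳 i, if ∀ i, r i = true → x' i = x i then p x' o r else 0)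
        = ∑ x' : ∀ i, 𝒳 i, if ∀ i, r i = true → x' i = x i then q x' o r else 0)
    -- (iii) every labeled edge of `H` is valid for `p` and for `q`
    (h_valid_p : ∀ r' i r, E r' i r → ∀ (x : ∀ j, 𝒳 j) (o : 𝒪),
      0 < (∑ y : 𝒳 i, p (Function.update x i y) o r) →
      0 < (∑ y : 𝒳 i, p (Function.update x i y) o r') →
      p x o r / (∑ y : 𝒳 i, p (Function.update x i y) o r)
        = p x o r' / (∑ y : 𝒳 i, p (Function.update x i y) o r'))
    (h_valid_q : ∀ r' i r, E r' i r → ∀ (x : ∀ j, 𝒳 j) (o : 𝒪),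
      0 < (∑ y : 𝒳 i, q (Function.update x i y) o r) →
      0 < (∑ y : 𝒳 i, q (Function.update x i y) o r') →
      q x o r / (∑ y : 𝒳 i, q (Function.update x i y) o r)
        = q x o r' / (∑ y : 𝒳 i, q (Function.update x i y) o r')) :
    ∀ r ∈ Vt, ∀ (x : ∀ i, 𝒳 i) (o : 𝒪), p x o r = q x o r := by
  have hwf : WellFounded (Relation.TransGen (fun a b => ∃ i, E a i b)) := by
    haveI : Std.Irrefl (Relation.TransGen (fun a b => ∃ i, E a i b)) := ⟨hE_acyclic⟩
    exact Finite.wellFounded_of_trans_of_irrefl _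
  intro r
  induction r using hwf.induction with
  | _ r ih =>
  intro hr x o
  have hinv : ∀ i, r i = false → ∀ (z : ∀ j, 𝒳 j) (y : 𝒳 i),
      p (Function.update z i y) o r / q (Function.update z i y) o r = p z o r / q z o r := by
    intro i hi
    obtain ⟨r', hE, -⟩ := hI2 r hr i hi
    have hr' := (hE_vert _ _ _ hE).1
    have hne : (Finset.univ : Finset (𝒳 i)).Nonempty := Finset.univ_nonempty
    have key : ∀ z : ∀ j, 𝒳 j, p z o r / q z o r =
        (∑ y : 𝒳 i, p (Function.update z i y) o r) /
          (∑ y : 𝒳 i, q (Function.update z i y) o r) := by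
      intro z
      have hP : 0 < ∑ y : 𝒳 i, p (Function.update z i y) o r :=
        Finset.sum_pos (fun y _ => hp_pos r hr _ _) hne
      have hP' : 0 < ∑ y : 𝒳 i, p (Function.update z i y) o r' :=
        Finset.sum_pos (fun y _ => hp_pos r' hr' _ _) hne
      have hQ : 0 < ∑ y : 𝒳 i, q (Function.update z i y) o r :=
        Finset.sum_pos (fun y _ => hq_pos r hr _ _) hne
      have hQ' : 0 < ∑ y : 𝒳 i, q (Function.update z i y) o r' :=
        Finset.sum_pos (fun y _ => hq_pos r' hr' _ _) hne
      have h1 := h_valid_p r' i r hE z o hP hP'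
      have h2 := h_valid_q r' i r hE z o hQ hQ'
      have heq : ∀ w, p w o r' = q w o r' := fun w =>
        ih r' (Relation.TransGen.single ⟨i, hE⟩) hr' w o
      simp only [heq] at h1
      rw [← h2, div_eq_div_iff hP.ne' hQ.ne'] at h1
      rw [div_eq_div_iff (hq_pos r hr z o).ne' hQ.ne', h1, mul_comm]
    intro z y
    rw [key, key z]
    simp only [Function.update_idem]
  have hpw : ∀ (x' : ∀ j, 𝒳 j) (s : Finset (Fin K)), (∀ i ∈ s, r i = false) →
      p (s.piecewise x' x) o r / q (s.piecewise x' x) o r = p x o r / q x o r := by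
    intro x' s
    induction s using Finset.induction_on with
    | empty => intro _; simp
    | insert j s hj ihs =>
      intro h
      rw [Finset.piecewise_insert, hinv j (h j (Finset.mem_insert_self _ _))]
      exact ihs fun i hi => h i (Finset.mem_insert_of_mem hi)
  have hrat : ∀ x' : ∀ j, 𝒳 j, (∀ i, r i = true → x' i = x i) →
      p x' o r = p x o r / q x o r * q x' o r := by
    intro x' hx'
    have h := hpw x' (Finset.univ.filter fun i => r i = false) (by simp)
    have he : (Finset.univ.filter fun i => r i = false).piecewise x' x = x' := by
      funext i
      cases hri : r i with
      | false => simp [Finset.piecewise, hri]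
      | true => simp [Finset.piecewise, hri, hx' i hri]
    rw [he] at h
    rw [← h, div_mul_cancel₀ _ (hq_pos r hr x' o).ne']
  have hsum := h_obs r o x
  have hS : (∑ x' : ∀ i, 𝒳 i, if ∀ i, r i = true → x' i = x i then p x' o r else 0)
      = p x o r / q x o r *
        ∑ x' : ∀ i, 𝒳 i, if ∀ i, r i = true → x' i = x i then q x' o r else 0 := by
    rw [Finset.mul_sum]
    refine Finset.sum_congr rfl fun x' _ => ?_
    split_ifs with h
    · exact hrat x' h
    · simp
  have hpos : 0 < ∑ x' : ∀ i, 𝒳 i, if ∀ i, r i = true → x' i = x i then q x' o r else 0 := by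
    refine Finset.sum_pos' (fun x' _ => ?_) ⟨x, Finset.mem_univ _, ?_⟩
    · split_ifs
      · exact hq_nonneg _ _ _
      · exact le_rfl
    · simpa using hq_pos r hr x o
  rw [hS] at hsum
  have h1 : p x o r / q x o r = 1 := by
    apply mul_right_cancel₀ hpos.ne'
    rw [hsum, one_mul]
  exact (div_eq_one_iff_eq (hq_pos r hr x o).ne').1 h1
end

section
/- Let p and q be full laws and r a missingness pattern with p(X = x, O = o, R = r) > 0 and q(X = x, O = o, R = r) > 0 for all x, o. Suppose (i) for every o and every assignment x_{O(r)}, ∑_{x_{M(r)}} p(X = x, O = o, R = r) = ∑_{x_{M(r)}} q(X = x, O = o, R = r), and (ii) for every i ∈ M(r) and all values x, o, p(X_i = x_i | X_{-i} = x_{-i}, O = o, R = r) = q(X_i = x_i | X_{-i} = x_{-i}, O = o, R = r). Then p(X = x, O = o, R = r) = q(X = x, O = o, R = r) for all x, o. (The joint at a pattern is determined by its interpolation density, the margin p(O, R = r), and the Gibbs factors of its extrapolation density.) -/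
/-- The joint distribution at a pattern `r` is determined by its
interpolation density (and margin over `O, R = r`) together with the Gibbs factors of
its extrapolation density, for full laws positive at `r`. -/
theorem pattern_joint_determined_by_gibbs
    (K : ℕ) (hK : 1 ≤ K)
    (𝒳 : Fin K → Type) [∀ i, Fintype (𝒳 i)] [∀ i, Nonempty (𝒳 i)]
    [∀ i, DecidableEq (𝒳 i)]
    (𝒪 : Type) [Fintype 𝒪] [Nonempty 𝒪]
    (p q : (∀ i, 𝒳 i) → 𝒪 → (Fin K → Bool) → ℝ)
    -- `p` and `q` are probability mass functions (full laws)
    (hp_nonneg : ∀ x o r, 0 ≤ p x o r)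
    (hp_sum : ∑ x : ∀ i, 𝒳 i, ∑ o : 𝒪, ∑ r : Fin K → Bool, p x o r = 1)
    (hq_nonneg : ∀ x o r, 0 ≤ q x o r)
    (hq_sum : ∑ x : ∀ i, 𝒳 i, ∑ o : 𝒪, ∑ r : Fin K → Bool, q x o r = 1)
    -- a missingness pattern at which both laws are positive
    (r : Fin K → Bool)
    (hp_pos : ∀ (x : ∀ i, 𝒳 i) (o : 𝒪), 0 < p x o r)
    (hq_pos : ∀ (x : ∀ i, 𝒳 i) (o : 𝒪), 0 < q x o r)
    -- (i) the interpolation margins agree: for every `o` and assignment to `X_{O(r)}`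
    (h_interp : ∀ (o : 𝒪) (x : ∀ i, 𝒳 i),
      (∑ x' : ∀ i, 𝒳 i, if ∀ i, r i = true → x' i = x i then p x' o r else 0)
        = ∑ x' : ∀ i, 𝒳 i, if ∀ i, r i = true → x' i = x i then q x' o r else 0)
    -- (ii) the Gibbs factors agree for every `i ∈ M(r)`
    (h_gibbs : ∀ i : Fin K, r i = false → ∀ (x : ∀ j, 𝒳 j) (o : 𝒪),
      p x o r / (∑ y : 𝒳 i, p (Function.update x i y) o r)
        = q x o r / (∑ y : 𝒳 i, q (Function.update x i y) o r)) :
    ∀ (x : ∀ i, 𝒳 i) (o : 𝒪), p x o r = q x o r := by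
  intro x o
  have hstep : ∀ (i : Fin K), r i = false → ∀ (x : ∀ j, 𝒳 j) (y : 𝒳 i),
      p (Function.update x i y) o r / q (Function.update x i y) o r = p x o r / q x o r := by
    intro i hi x y
    have hne : Nonempty (𝒳 i) := inferInstance
    have h1 := h_gibbs i hi x o
    have h2 := h_gibbs i hi (Function.update x i y) o
    simp only [Function.update_idem] at h2
    have hP : 0 < ∑ y : 𝒳 i, p (Function.update x i y) o r :=
      Finset.sum_pos (fun y _ => hp_pos _ o) Finset.univ_nonempty
    have hQ : 0 < ∑ y : 𝒳 i, q (Function.update x i y) o r :=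
      Finset.sum_pos (fun y _ => hq_pos _ o) Finset.univ_nonempty
    have hq1 := hq_pos x o
    have hq2 := hq_pos (Function.update x i y) o
    have key : ∀ a b P Q : ℝ, 0 < b → 0 < P → 0 < Q → a / P = b / Q → a / b = P / Q := by
      intro a b P Q hb hP hQ h
      rw [div_eq_div_iff hP.ne' hQ.ne'] at h
      rw [div_eq_div_iff hb.ne' hQ.ne']
      linarith
    rw [key _ _ _ _ hq1 hP hQ h1, key _ _ _ _ hq2 hP hQ h2]
  have hS : ∀ (S : Finset (Fin K)), (∀ i ∈ S, r i = false) → ∀ x' : ∀ i, 𝒳 i,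
      (∀ i, i ∉ S → x' i = x i) → p x' o r / q x' o r = p x o r / q x o r := by
    intro S
    induction S using Finset.induction_on with
    | empty =>
      intro _ x' h
      have : x' = x := funext fun i => h i (Finset.notMem_empty i)
      rw [this]
    | insert a S ha ih =>
      intro hr x' h
      rw [← hstep a (hr a (Finset.mem_insert_self a S)) x' (x a)]
      apply ih (fun i hi => hr i (Finset.mem_insert_of_mem hi))
      intro i hi
      by_cases hia : i = a
      · subst hia
        simp
      · rw [Function.update_of_ne hia]
        exact h i (by simp [hia, hi])
  have hc : ∀ x' : ∀ i, 𝒳 i, (∀ i, r i = true → x' i = x i) →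
      p x' o r = p x o r / q x o r * q x' o r := by
    intro x' h
    rw [← hS (Finset.univ.filter fun i => r i = false) (by simp) x'
      (fun i hi => h i (by simpa using hi))]
    rw [div_mul_cancel₀ _ (hq_pos x' o).ne']
  have hsum := h_interp o x
  have hQ : 0 < ∑ x' : ∀ i, 𝒳 i, if ∀ i, r i = true → x' i = x i then q x' o r else 0 := by
    apply Finset.sum_pos'
    · intro x' _
      split_ifs
      · exact hq_nonneg _ _ _
      · exact le_rfl
    · refine ⟨x, Finset.mem_univ _, ?_⟩
      rw [if_pos (fun _ _ => rfl)]
      exact hq_pos x o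
  have hP : (∑ x' : ∀ i, 𝒳 i, if ∀ i, r i = true → x' i = x i then p x' o r else 0)
      = p x o r / q x o r *
        ∑ x' : ∀ i, 𝒳 i, if ∀ i, r i = true → x' i = x i then q x' o r else 0 := by
    rw [Finset.mul_sum]
    refine Finset.sum_congr rfl fun x' _ => ?_
    split_ifs with h
    · exact hc x' h
    · simp
  rw [hP] at hsum
  have h1 : p x o r / q x o r = 1 := by
    have := mul_right_cancel₀ hQ.ne' (hsum.trans (one_mul _).symm)
    exact this
  exact (div_eq_one_iff_eq (hq_pos x o).ne').mp h1
end

section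
/- Let p and q be full laws that are strictly positive, i.e., p(X = x, O = o, R = r) > 0 and q(X = x, O = o, R = r) > 0 for all values x, o and all patterns r. Suppose p and q have the same observed law, and suppose that for every i ∈ {1,…,K} the conditional independence X_i ⊥ R_i | X_{-i}, R_{-i}, O holds under both p and q. Then p = q. (Soundness of PM-ID: under strict positivity and the itemwise independences implied by the graphical condition (S1), the full law is identified from the observed law.) -/
/-- Cross-multiplied form of the itemwise independence. -/
lemma ci_cross {K : ℕ} {𝒳 : Fin K → Type} [∀ i, Fintype (𝒳 i)] {𝒪 : Type}
    (p : (∀ i, 𝒳 i) → 𝒪 → (Fin K → Bool) → ℝ)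
    (hp_pos : ∀ x o r, 0 < p x o r)
    (hCI_p : ∀ (i : Fin K) (x : ∀ j, 𝒳 j) (o : 𝒪) (r : Fin K → Bool),
      0 < (∑ y : 𝒳 i, ∑ b : Bool, p (Function.update x i y) o (Function.update r i b)) →
      p x o r
          / (∑ y : 𝒳 i, ∑ b : Bool, p (Function.update x i y) o (Function.update r i b))
        = ((∑ b : Bool, p x o (Function.update r i b))
            / (∑ y : 𝒳 i, ∑ b : Bool, p (Function.update x i y) o (Function.update r i b)))
          * ((∑ y : 𝒳 i, p (Function.update x i y) o r)
            / (∑ y : 𝒳 i, ∑ b : Bool, p (Function.update x i y) o (Function.update r i b))))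
    (i : Fin K) (x : ∀ j, 𝒳 j) (o : 𝒪) (r : Fin K → Bool) (y : 𝒳 i) (b : Bool) :
    p x o r * p (Function.update x i y) o (Function.update r i b)
      = p (Function.update x i y) o r * p x o (Function.update r i b) := by
  have key : ∀ (x : ∀ j, 𝒳 j) (r : Fin K → Bool),
      p x o r * (∑ y : 𝒳 i, ∑ b : Bool, p (Function.update x i y) o (Function.update r i b))
      = (∑ b : Bool, p x o (Function.update r i b)) *
        (∑ y : 𝒳 i, p (Function.update x i y) o r) := by
    intro x r
    have hD : 0 < (∑ y : 𝒳 i, ∑ b : Bool,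
        p (Function.update x i y) o (Function.update r i b)) :=
      Finset.sum_pos (fun y _ => Finset.sum_pos (fun b _ => hp_pos _ _ _) ⟨true, by simp⟩)
        ⟨x i, by simp⟩
    have h := hCI_p i x o r hD
    have hne := hD.ne'
    generalize (∑ y : 𝒳 i, ∑ b : Bool,
        p (Function.update x i y) o (Function.update r i b)) = D at h hne
    field_simp at h
    linarith
  have cross : ∀ x : ∀ j, 𝒳 j,
      p x o r * (∑ y : 𝒳 i, p (Function.update x i y) o (Function.update r i b))
      = p x o (Function.update r i b) * (∑ y : 𝒳 i, p (Function.update x i y) o r) := by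
    intro x
    have hD : 0 < (∑ y : 𝒳 i, ∑ b : Bool,
        p (Function.update x i y) o (Function.update r i b)) :=
      Finset.sum_pos (fun y _ => Finset.sum_pos (fun b _ => hp_pos _ _ _) ⟨true, by simp⟩)
        ⟨x i, by simp⟩
    have h1 := key x r
    have h2 := key x (Function.update r i b)
    simp only [Function.update_idem] at h2
    apply mul_right_cancel₀ hD.ne'
    linear_combination (∑ y : 𝒳 i, p (Function.update x i y) o (Function.update r i b)) * h1
      - (∑ y : 𝒳 i, p (Function.update x i y) o r) * h2
  have c1 := cross x
  have c2 := cross (Function.update x i y)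
  simp only [Function.update_idem] at c2
  have hS : 0 < ∑ y : 𝒳 i, p (Function.update x i y) o r :=
    Finset.sum_pos (fun y _ => hp_pos _ _ _) ⟨x i, by simp⟩
  apply mul_right_cancel₀ hS.ne'
  linear_combination p (Function.update x i y) o r * c1 - p x o r * c2

/-- Soundness of PM-ID under strict positivity: two strictly positive full
laws with the same observed law under which the itemwise conditional independences
`X_i ⊥ R_i | X_{-i}, R_{-i}, O` hold must be equal. -/
theorem pm_id_soundness_strict_positivity
    (K : ℕ) (hK : 1 ≤ K)
    (𝒳 : Fin K → Type) [∀ i, Fintype (𝒳 i)] [∀ i, Nonempty (𝒳 i)]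
    [∀ i, DecidableEq (𝒳 i)]
    (𝒪 : Type) [Fintype 𝒪] [Nonempty 𝒪]
    (p q : (∀ i, 𝒳 i) → 𝒪 → (Fin K → Bool) → ℝ)
    -- `p` and `q` are strictly positive probability mass functions (full laws)
    (hp_pos : ∀ x o r, 0 < p x o r)
    (hp_sum : ∑ x : ∀ i, 𝒳 i, ∑ o : 𝒪, ∑ r : Fin K → Bool, p x o r = 1)
    (hq_pos : ∀ x o r, 0 < q x o r)
    (hq_sum : ∑ x : ∀ i, 𝒳 i, ∑ o : 𝒪, ∑ r : Fin K → Bool, q x o r = 1)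
    -- `p` and `q` have the same observed law
    (h_obs : ∀ (r : Fin K → Bool) (o : 𝒪) (x : ∀ i, 𝒳 i),
      (∑ x' : ∀ i, 𝒳 i, if ∀ i, r i = true → x' i = x i then p x' o r else 0)
        = ∑ x' : ∀ i, 𝒳 i, if ∀ i, r i = true → x' i = x i then q x' o r else 0)
    -- `X_i ⊥ R_i | X_{-i}, R_{-i}, O` under `p`
    (hCI_p : ∀ (i : Fin K) (x : ∀ j, 𝒳 j) (o : 𝒪) (r : Fin K → Bool),
      0 < (∑ y : 𝒳 i, ∑ b : Bool, p (Function.update x i y) o (Function.update r i b)) →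
      p x o r
          / (∑ y : 𝒳 i, ∑ b : Bool, p (Function.update x i y) o (Function.update r i b))
        = ((∑ b : Bool, p x o (Function.update r i b))
            / (∑ y : 𝒳 i, ∑ b : Bool, p (Function.update x i y) o (Function.update r i b)))
          * ((∑ y : 𝒳 i, p (Function.update x i y) o r)
            / (∑ y : 𝒳 i, ∑ b : Bool, p (Function.update x i y) o (Function.update r i b))))
    -- `X_i ⊥ R_i | X_{-i}, R_{-i}, O` under `q`
    (hCI_q : ∀ (i : Fin K) (x : ∀ j, 𝒳 j) (o : 𝒪) (r : Fin K → Bool),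
      0 < (∑ y : 𝒳 i, ∑ b : Bool, q (Function.update x i y) o (Function.update r i b)) →
      q x o r
          / (∑ y : 𝒳 i, ∑ b : Bool, q (Function.update x i y) o (Function.update r i b))
        = ((∑ b : Bool, q x o (Function.update r i b))
            / (∑ y : 𝒳 i, ∑ b : Bool, q (Function.update x i y) o (Function.update r i b)))
          * ((∑ y : 𝒳 i, q (Function.update x i y) o r)
            / (∑ y : 𝒳 i, ∑ b : Bool, q (Function.update x i y) o (Function.update r i b)))) :
    ∀ (x : ∀ i, 𝒳 i) (o : 𝒪) (r : Fin K → Bool), p x o r = q x o r := by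
  intro x o r
  induction hn : (Finset.univ.filter (fun i => r i = false)).card using Nat.strong_induction_on
    generalizing x r with
  | _ n ih =>
  subst hn
  set c := p x o r / q x o r with hc
  have hcx : p x o r = c * q x o r := by
    rw [hc, div_mul_cancel₀ _ (hq_pos x o r).ne']
  have step : ∀ (i : Fin K) (z : ∀ j, 𝒳 j) (y : 𝒳 i), r i = false →
      p z o r = c * q z o r →
      p (Function.update z i y) o r = c * q (Function.update z i y) o r := by
    intro i z y hi hz
    have hlt : (Finset.univ.filter (fun j => Function.update r i true j = false)).card
        < (Finset.univ.filter (fun j => r j = false)).card := by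
      apply Finset.card_lt_card
      refine Finset.ssubset_iff_subset_ne.2 ⟨?_, ?_⟩
      · intro j
        by_cases hj : j = i
        · subst hj; simp
        · simp [Function.update_of_ne hj]
      · intro h
        have : i ∈ Finset.univ.filter (fun j => r j = false) := by simp [hi]
        rw [← h] at this
        simp at this
    have e1 := ih _ hlt z (Function.update r i true) rfl
    have e2 := ih _ hlt (Function.update z i y) (Function.update r i true) rfl
    have cp := ci_cross p hp_pos hCI_p i z o r y true
    have cq := ci_cross q hq_pos hCI_q i z o r y true
    rw [e1, e2, hz] at cp
    apply mul_right_cancel₀ (hq_pos z o (Function.update r i true)).ne'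
    linear_combination c * cq - cp
  have all : ∀ (s : Finset (Fin K)), (∀ i ∈ s, r i = false) → ∀ z : ∀ j, 𝒳 j,
      (∀ i, i ∉ s → z i = x i) → p z o r = c * q z o r := by
    intro s
    induction s using Finset.induction_on with
    | empty =>
      intro _ z hz
      have : z = x := funext fun i => hz i (by simp)
      rw [this, hcx]
    | insert i s _ ihs =>
      intro hs z hz
      have h1 := ihs (fun j hj => hs j (Finset.mem_insert_of_mem hj))
        (Function.update z i (x i)) (by
          intro j hj
          by_cases hji : j = i
          · subst hji; simp
          · rw [Function.update_of_ne hji]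
            exact hz j (by simp [hji, hj]))
      have h2 := step i _ (z i) (hs i (Finset.mem_insert_self _ _)) h1
      simpa using h2
  have hsum := h_obs r o x
  have hrw : (∑ x' : ∀ i, 𝒳 i, if ∀ i, r i = true → x' i = x i then p x' o r else 0)
      = c * ∑ x' : ∀ i, 𝒳 i, if ∀ i, r i = true → x' i = x i then q x' o r else 0 := by
    rw [Finset.mul_sum]
    refine Finset.sum_congr rfl fun z _ => ?_
    split_ifs with h
    · refine all (Finset.univ.filter (fun i => r i = false)) (by simp) z ?_
      intro i hi
      exact h i (by simpa using hi)
    · simp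
  have hpos : 0 < ∑ x' : ∀ i, 𝒳 i, if ∀ i, r i = true → x' i = x i then q x' o r else 0 := by
    refine Finset.sum_pos' (fun z _ => ?_) ⟨x, Finset.mem_univ _, ?_⟩
    · split_ifs
      · exact (hq_pos _ _ _).le
      · exact le_rfl
    · simpa using hq_pos x o r
  rw [hrw] at hsum
  have hc1 : c = 1 := by
    apply mul_right_cancel₀ hpos.ne'
    rw [hsum, one_mul]
  rw [hcx, hc1, one_mul]
end

section
/- Let ℛ⁺ ⊆ {0,1}^K be a set of missingness patterns containing the complete case pattern, and let p and q be full laws such that for every r ∈ ℛ⁺ and all x, o, p(X = x, O = o, R = r) > 0 and q(X = x, O = o, R = r) > 0, while p(X = x, O = o, R = r) = 0 = q(X = x, O = o, R = r) for every r ∉ ℛ⁺. Suppose p and q have the same observed law, and suppose there is a PM-ID compatible pattern DAG H with vertex set ℛ⁺ all of whose labeled edges are valid for both p and q. Then p = q. (Soundness of PM-ID+: the full law is identified under positivity violations confined to patterns outside ℛ⁺.) -/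
/-- Soundness of PM-ID+: the full law is identified under positivity
violations confined to patterns outside `ℛ⁺`, given a PM-ID compatible pattern DAG
with vertex set `ℛ⁺` whose labeled edges are valid for both laws. -/
theorem pm_id_plus_soundness
    (K : ℕ) (hK : 1 ≤ K)
    (𝒳 : Fin K → Type) [∀ i, Fintype (𝒳 i)] [∀ i, Nonempty (𝒳 i)]
    [∀ i, DecidableEq (𝒳 i)]
    (𝒪 : Type) [Fintype 𝒪] [Nonempty 𝒪]
    (p q : (∀ i, 𝒳 i) → 𝒪 → (Fin K → Bool) → ℝ)
    -- `p` and `q` are probability mass functions (full laws)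
    (hp_nonneg : ∀ x o r, 0 ≤ p x o r)
    (hp_sum : ∑ x : ∀ i, 𝒳 i, ∑ o : 𝒪, ∑ r : Fin K → Bool, p x o r = 1)
    (hq_nonneg : ∀ x o r, 0 ≤ q x o r)
    (hq_sum : ∑ x : ∀ i, 𝒳 i, ∑ o : 𝒪, ∑ r : Fin K → Bool, q x o r = 1)
    -- `ℛ⁺` contains the complete case pattern
    (Rplus : Set (Fin K → Bool))
    (hcc : (fun _ => true) ∈ Rplus)
    -- positivity on `ℛ⁺` and zero support outside `ℛ⁺`, for both laws
    (hp_pos : ∀ r ∈ Rplus, ∀ (x : ∀ i, 𝒳 i) (o : 𝒪), 0 < p x o r)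
    (hq_pos : ∀ r ∈ Rplus, ∀ (x : ∀ i, 𝒳 i) (o : 𝒪), 0 < q x o r)
    (hp_zero : ∀ r ∉ Rplus, ∀ (x : ∀ i, 𝒳 i) (o : 𝒪), p x o r = 0)
    (hq_zero : ∀ r ∉ Rplus, ∀ (x : ∀ i, 𝒳 i) (o : 𝒪), q x o r = 0)
    -- `p` and `q` have the same observed law
    (h_obs : ∀ (r : Fin K → Bool) (o : 𝒪) (x : ∀ i, 𝒳 i),
      (∑ x' : ∀ i, 𝒳 i, if ∀ i, r i = true → x' i = x i then p x' o r else 0)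
        = ∑ x' : ∀ i, 𝒳 i, if ∀ i, r i = true → x' i = x i then q x' o r else 0)
    -- a pattern DAG `H` with vertex set `ℛ⁺` and labeled edges `E r̃ i r`
    (E : (Fin K → Bool) → Fin K → (Fin K → Bool) → Prop)
    (hE_vert : ∀ r' i r, E r' i r → r' ∈ Rplus ∧ r ∈ Rplus ∧ r' ≠ r)
    (hE_acyclic : ∀ r, ¬ Relation.TransGen (fun a b => ∃ i, E a i b) r r)
    -- PM-ID compatibility (I1)
    (hI1_root : ∀ r' i, ¬ E r' i (fun _ => true))
    -- PM-ID compatibility (I2)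
    (hI2 : ∀ r ∈ Rplus, ∀ i : Fin K, r i = false →
      ∃ r', E r' i r ∧
        Relation.ReflTransGen (fun a b => ∃ j, E a j b) (fun _ => true) r')
    -- every labeled edge of `H` is valid for `p` and for `q`
    (h_valid_p : ∀ r' i r, E r' i r → ∀ (x : ∀ j, 𝒳 j) (o : 𝒪),
      0 < (∑ y : 𝒳 i, p (Function.update x i y) o r) →
      0 < (∑ y : 𝒳 i, p (Function.update x i y) o r') →
      p x o r / (∑ y : 𝒳 i, p (Function.update x i y) o r)
        = p x o r' / (∑ y : 𝒳 i, p (Function.update x i y) o r'))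
    (h_valid_q : ∀ r' i r, E r' i r → ∀ (x : ∀ j, 𝒳 j) (o : 𝒪),
      0 < (∑ y : 𝒳 i, q (Function.update x i y) o r) →
      0 < (∑ y : 𝒳 i, q (Function.update x i y) o r') →
      q x o r / (∑ y : 𝒳 i, q (Function.update x i y) o r)
        = q x o r' / (∑ y : 𝒳 i, q (Function.update x i y) o r')) :
    ∀ (x : ∀ i, 𝒳 i) (o : 𝒪) (r : Fin K → Bool), p x o r = q x o r := by
  intro x o r
  have hwf : WellFounded (Relation.TransGen (fun a b => ∃ i, E a i b)) := by
    have : Std.Irrefl (Relation.TransGen (fun a b => ∃ i, E a i b)) := ⟨hE_acyclic⟩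
    have : IsTrans _ (Relation.TransGen (fun a b => ∃ i, E a i b)) :=
      ⟨fun _ _ _ h1 h2 => h1.trans h2⟩
    exact Finite.wellFounded_of_trans_of_irrefl _
  induction r using hwf.induction generalizing x o with
  | _ r ih =>
  by_cases hr : r ∈ Rplus
  swap
  · rw [hp_zero r hr, hq_zero r hr]
  have hq0 : ∀ z, q z o r ≠ 0 := fun z => (hq_pos r hr z o).ne'
  have step : ∀ (i : Fin K), r i = false → ∀ (z : ∀ i, 𝒳 i) (y : 𝒳 i),
      p (Function.update z i y) o r / q (Function.update z i y) o r = p z o r / q z o r := by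
    intro i hi
    obtain ⟨r', hE, -⟩ := hI2 r hr i hi
    have hr' := (hE_vert _ _ _ hE).1
    have heq : ∀ z, p z o r' = q z o r' :=
      fun z => ih r' (Relation.TransGen.single ⟨i, hE⟩) z o
    have hpS : ∀ s ∈ Rplus, ∀ z : (∀ i, 𝒳 i), 0 < ∑ y : 𝒳 i, p (Function.update z i y) o s :=
      fun s hs z => Finset.sum_pos (fun y _ => hp_pos s hs _ o) Finset.univ_nonempty
    have hqS : ∀ s ∈ Rplus, ∀ z : (∀ i, 𝒳 i), 0 < ∑ y : 𝒳 i, q (Function.update z i y) o s :=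
      fun s hs z => Finset.sum_pos (fun y _ => hq_pos s hs _ o) Finset.univ_nonempty
    have key : ∀ z : (∀ i, 𝒳 i), p z o r / q z o r =
        (∑ y : 𝒳 i, p (Function.update z i y) o r) /
          (∑ y : 𝒳 i, q (Function.update z i y) o r) := by
      intro z
      have h1 := h_valid_p r' i r hE z o (hpS r hr z) (hpS r' hr' z)
      have h2 := h_valid_q r' i r hE z o (hqS r hr z) (hqS r' hr' z)
      simp only [heq] at h1
      rw [← h2, div_eq_div_iff (hpS r hr z).ne' (hqS r hr z).ne'] at h1
      rw [div_eq_div_iff (hq0 z) (hqS r hr z).ne', h1, mul_comm]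
    intro z y
    rw [key, key z]
    simp only [Function.update_idem]
  have agree : ∀ s : Finset (Fin K), (∀ i ∈ s, r i = false) → ∀ z : (∀ i, 𝒳 i),
      (∀ i, i ∉ s → z i = x i) → p z o r / q z o r = p x o r / q x o r := by
    intro s
    induction s using Finset.induction_on with
    | empty =>
      intro _ z hz
      rw [show z = x from funext fun i => hz i (by simp)]
    | insert a s _ ihs =>
      intro hs z hz
      rw [← step a (hs a (by simp)) z (x a)]
      apply ihs (fun i hi => hs i (by simp [hi]))
      intro i hi
      by_cases hia : i = a
      · subst hia; simp
      · rw [Function.update_of_ne hia]; exact hz i (by simp [hi, hia])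
  have hobs := h_obs r o x
  have hsum : (∑ x' : ∀ i, 𝒳 i, if ∀ i, r i = true → x' i = x i then p x' o r else 0)
      = (p x o r / q x o r) *
        ∑ x' : ∀ i, 𝒳 i, if ∀ i, r i = true → x' i = x i then q x' o r else 0 := by
    rw [Finset.mul_sum]
    refine Finset.sum_congr rfl fun z _ => ?_
    split_ifs with h
    · rw [← agree (Finset.univ.filter fun i => r i = false) (by simp) z
        (fun i hi => h i (by simpa using hi)), div_mul_cancel₀ _ (hq0 z)]
    · simp
  have hpos : 0 < ∑ x' : ∀ i, 𝒳 i, if ∀ i, r i = true → x' i = x i then q x' o r else 0 := by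
    refine Finset.sum_pos' (fun z _ => ?_) ⟨x, Finset.mem_univ _, ?_⟩
    · split_ifs
      · exact hq_nonneg _ _ _
      · exact le_rfl
    · simpa using hq_pos r hr x o
  rw [hsum] at hobs
  have h1 : p x o r / q x o r = 1 := by
    apply mul_right_cancel₀ hpos.ne'
    rw [hobs, one_mul]
  exact (div_eq_one_iff_eq (hq0 x)).1 h1
end

section
/- Let S be a nonempty finite index set and 𝒳_i a nonempty finite set for each i ∈ S. Let p and q be strictly positive probability mass functions on ∏_{i ∈ S} 𝒳_i. If for every i ∈ S and every x ∈ ∏_{i ∈ S} 𝒳_i the full conditionals agree, p(X_i = x_i | X_{-i} = x_{-i}) = q(X_i = x_i | X_{-i} = x_{-i}), then p = q. (A strictly positive joint distribution on a finite product is determined by its Gibbs factors.) -/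
/-- A strictly positive joint distribution on a finite product is
determined by its full conditionals (Gibbs factors). -/
theorem positive_pmf_determined_by_full_conditionals
    (S : Type) [Fintype S] [Nonempty S] [DecidableEq S]
    (𝒳 : S → Type) [∀ i, Fintype (𝒳 i)] [∀ i, Nonempty (𝒳 i)]
    (p q : (∀ i, 𝒳 i) → ℝ)
    (hp_pos : ∀ x, 0 < p x) (hp_sum : ∑ x : ∀ i, 𝒳 i, p x = 1)
    (hq_pos : ∀ x, 0 < q x) (hq_sum : ∑ x : ∀ i, 𝒳 i, q x = 1)
    (h_cond : ∀ (i : S) (x : ∀ j, 𝒳 j),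
      p x / (∑ y : 𝒳 i, p (Function.update x i y))
        = q x / (∑ y : 𝒳 i, q (Function.update x i y))) :
    p = q := by
  have hr : ∀ x i, p x / q x
      = (∑ y : 𝒳 i, p (Function.update x i y)) / (∑ y : 𝒳 i, q (Function.update x i y)) := by
    intro x i
    have hP : 0 < ∑ y : 𝒳 i, p (Function.update x i y) :=
      Finset.sum_pos (fun _ _ => hp_pos _) Finset.univ_nonempty
    have hQ : 0 < ∑ y : 𝒳 i, q (Function.update x i y) :=
      Finset.sum_pos (fun _ _ => hq_pos _) Finset.univ_nonempty
    have h := h_cond i x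
    rw [div_eq_div_iff hP.ne' hQ.ne'] at h
    rw [div_eq_div_iff (hq_pos x).ne' hQ.ne', h, mul_comm]
  have hu : ∀ x i y, p (Function.update x i y) / q (Function.update x i y) = p x / q x := by
    intro x i y
    rw [hr x i, hr (Function.update x i y) i]
    simp only [Function.update_idem]
  have hall : ∀ x z, p x / q x = p z / q z := by
    intro x z
    have key : ∀ s : Finset S, p (s.piecewise x z) / q (s.piecewise x z) = p z / q z := by
      intro s
      induction s using Finset.induction_on with
      | empty => simp
      | insert j s _ ih => rw [Finset.piecewise_insert, hu, ih]
    simpa using key Finset.univ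
  funext z
  have hmul : ∀ x, p x = p z / q z * q x := by
    intro x
    rw [← hall x z, div_mul_cancel₀ _ (hq_pos x).ne']
  have h1 : p z / q z = 1 := by
    have h := hp_sum
    rw [Finset.sum_congr rfl (fun x _ => hmul x), ← Finset.mul_sum, hq_sum, mul_one] at h
    exact h
  rw [hmul z, h1, one_mul]
end

section
/- Let 𝒜, ℬ, 𝒞 be nonempty finite sets, let p be a strictly positive probability mass function on 𝒜 × ℬ × 𝒞, and fix reference values a_0 ∈ 𝒜, b_0 ∈ ℬ. Let Z(c) = ∑_{a ∈ 𝒜, b ∈ ℬ} p(a | b_0, c)·p(b | a_0, c)·OR(a, b | c). Then for all a, b, c: p(a, b | c) = (1/Z(c))·p(a | b_0, c)·p(b | a_0, c)·OR(a, b | c). (Odds ratio factorization of a joint conditional distribution.) -/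
/-- `p(a | b, c)` -/
noncomputable def condA {𝒜 ℬ 𝒞 : Type} [Fintype 𝒜]
    (p : 𝒜 → ℬ → 𝒞 → ℝ) (a : 𝒜) (b : ℬ) (c : 𝒞) : ℝ :=
  p a b c / ∑ a' : 𝒜, p a' b c

/-- `p(b | a, c)` -/
noncomputable def condB {𝒜 ℬ 𝒞 : Type} [Fintype ℬ]
    (p : 𝒜 → ℬ → 𝒞 → ℝ) (a : 𝒜) (b : ℬ) (c : 𝒞) : ℝ :=
  p a b c / ∑ b' : ℬ, p a b' c

/-- `p(a, b | c)` -/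
noncomputable def condAB {𝒜 ℬ 𝒞 : Type} [Fintype 𝒜] [Fintype ℬ]
    (p : 𝒜 → ℬ → 𝒞 → ℝ) (a : 𝒜) (b : ℬ) (c : 𝒞) : ℝ :=
  p a b c / ∑ a' : 𝒜, ∑ b' : ℬ, p a' b' c

/-- `OR(a, b | c) = [p(a|b,c)/p(a0|b,c)] · [p(a0|b0,c)/p(a|b0,c)]` -/
noncomputable def oddsRatio {𝒜 ℬ 𝒞 : Type} [Fintype 𝒜]
    (p : 𝒜 → ℬ → 𝒞 → ℝ) (a0 : 𝒜) (b0 : ℬ) (a : 𝒜) (b : ℬ) (c : 𝒞) : ℝ :=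
  (condA p a b c / condA p a0 b c) * (condA p a0 b0 c / condA p a b0 c)

/-- `Z(c) = ∑_{a,b} p(a|b0,c)·p(b|a0,c)·OR(a,b|c)` -/
noncomputable def orZ {𝒜 ℬ 𝒞 : Type} [Fintype 𝒜] [Fintype ℬ]
    (p : 𝒜 → ℬ → 𝒞 → ℝ) (a0 : 𝒜) (b0 : ℬ) (c : 𝒞) : ℝ :=
  ∑ a : 𝒜, ∑ b : ℬ, condA p a b0 c * condB p a0 b c * oddsRatio p a0 b0 a b c

/-- Odds ratio factorization of a joint conditional distribution:
`p(a, b | c) = (1/Z(c)) · p(a | b0, c) · p(b | a0, c) · OR(a, b | c)`. -/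
theorem odds_ratio_factorization
    (𝒜 ℬ 𝒞 : Type) [Fintype 𝒜] [Fintype ℬ] [Fintype 𝒞]
    [Nonempty 𝒜] [Nonempty ℬ] [Nonempty 𝒞]
    (p : 𝒜 → ℬ → 𝒞 → ℝ)
    (hpos : ∀ a b c, 0 < p a b c)
    (hsum : ∑ a : 𝒜, ∑ b : ℬ, ∑ c : 𝒞, p a b c = 1)
    (a0 : 𝒜) (b0 : ℬ) :
    ∀ (a : 𝒜) (b : ℬ) (c : 𝒞),
      condAB p a b c
        = (1 / orZ p a0 b0 c) * condA p a b0 c * condB p a0 b c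
          * oddsRatio p a0 b0 a b c := by
  intro a b c
  have hA : ∀ b, 0 < ∑ a' : 𝒜, p a' b c := fun b =>
    Finset.sum_pos (fun a' _ => hpos a' b c) Finset.univ_nonempty
  have hB : ∀ a, 0 < ∑ b' : ℬ, p a b' c := fun a =>
    Finset.sum_pos (fun b' _ => hpos a b' c) Finset.univ_nonempty
  have hS : 0 < ∑ a' : 𝒜, ∑ b' : ℬ, p a' b' c :=
    Finset.sum_pos (fun a' _ => hB a') Finset.univ_nonempty
  obtain ⟨K, hK, key⟩ : ∃ K : ℝ, 0 < K ∧ ∀ a b,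
      condA p a b0 c * condB p a0 b c * oddsRatio p a0 b0 a b c = p a b c * K := by
    refine ⟨condA p a0 b0 c / ∑ b' : ℬ, p a0 b' c,
      div_pos (div_pos (hpos _ _ _) (hA _)) (hB _), fun a b => ?_⟩
    unfold oddsRatio condA condB
    have h1 := (hA b).ne'
    have h2 := (hA b0).ne'
    have h3 := (hB a0).ne'
    have h4 := (hpos a b0 c).ne'
    have h5 := (hpos a0 b c).ne'
    field_simp
  have hZ : orZ p a0 b0 c = (∑ a' : 𝒜, ∑ b' : ℬ, p a' b' c) * K := by
    simp only [orZ, key, Finset.sum_mul]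
  rw [mul_assoc, mul_assoc, ← mul_assoc (condA p a b0 c), key, hZ, condAB]
  have h1 := hS.ne'
  have h2 := hK.ne'
  field_simp
end

section
/- Let p be a strictly positive full law, i.e., p(X = x, O = o, R = r) > 0 for all x, o, r. For k ∈ {1,…,K} write R_{≺k} = (R_1,…,R_{k-1}), R_{≻k} = (R_{k+1},…,R_K), R_{-k} = all coordinates of R except the k-th, and define OR_k(r_k, r_{≺k} | x, o) = [p(R_k = r_k | R_{≺k} = r_{≺k}, R_{≻k} = 1, X = x, O = o)/p(R_k = 1 | R_{≺k} = r_{≺k}, R_{≻k} = 1, X = x, O = o)] · [p(R_k = 1 | R_{≺k} = 1, R_{≻k} = 1, X = x, O = o)/p(R_k = r_k | R_{≺k} = 1, R_{≻k} = 1, X = x, O = o)], and Z(x, o) = ∑_{r ∈ {0,1}^K} ∏_{k=1}^K p(R_k = r_k | R_{-k} = 1, X = x, O = o) · ∏_{k=2}^K OR_k(r_k, r_{≺k} | x, o). Then for every pattern r and all x, o: p(R = r | X = x, O = o) = (1/Z(x, o)) · ∏_{k=1}^K p(R_k = r_k | R_{-k} = 1, X = x, O = o) · ∏_{k=2}^K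 OR_k(r_k, r_{≺k} | x, o). (Recursive odds ratio factorization of the missingness mechanism with reference value 1 for each indicator.) -/
/-- The pattern equal to `r` on coordinates `j ≺ k`, equal to `b` at `k`, and equal to
`1` (true) on coordinates `j ≻ k`. -/
def mixPat {K : ℕ} (r : Fin K → Bool) (k : Fin K) (b : Bool) : Fin K → Bool :=
  fun j => if j < k then r j else if j = k then b else true

/-- `p(R_k = b | R_{≺k} = r_{≺k}, R_{≻k} = 1, X = x, O = o)`. -/
noncomputable def condRk {K : ℕ} {𝒳 : Fin K → Type} {𝒪 : Type}
    (p : (∀ i, 𝒳 i) → 𝒪 → (Fin K → Bool) → ℝ)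
    (x : ∀ i, 𝒳 i) (o : 𝒪) (r : Fin K → Bool) (k : Fin K) (b : Bool) : ℝ :=
  p x o (mixPat r k b) / ∑ b' : Bool, p x o (mixPat r k b')

/-- `p(R_k = b | R_{-k} = 1, X = x, O = o)`. -/
noncomputable def condRkRef {K : ℕ} {𝒳 : Fin K → Type} {𝒪 : Type}
    (p : (∀ i, 𝒳 i) → 𝒪 → (Fin K → Bool) → ℝ)
    (x : ∀ i, 𝒳 i) (o : 𝒪) (k : Fin K) (b : Bool) : ℝ :=
  p x o (fun j => if j = k then b else true)
    / ∑ b' : Bool, p x o (fun j => if j = k then b' else true)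

/-- `OR_k(r_k, r_{≺k} | x, o)` with reference value `1` for each indicator. -/
noncomputable def ORk {K : ℕ} {𝒳 : Fin K → Type} {𝒪 : Type}
    (p : (∀ i, 𝒳 i) → 𝒪 → (Fin K → Bool) → ℝ)
    (x : ∀ i, 𝒳 i) (o : 𝒪) (r : Fin K → Bool) (k : Fin K) : ℝ :=
  (condRk p x o r k (r k) / condRk p x o r k true)
    * (condRk p x o (fun _ => true) k true / condRk p x o (fun _ => true) k (r k))

/-- `Z(x, o)`, the normalizing function of the odds ratio factorization. -/
noncomputable def orZmiss {K : ℕ} {𝒳 : Fin K → Type} {𝒪 : Type} [∀ i, Fintype (𝒳 i)]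
    (p : (∀ i, 𝒳 i) → 𝒪 → (Fin K → Bool) → ℝ)
    (x : ∀ i, 𝒳 i) (o : 𝒪) : ℝ :=
  ∑ r : Fin K → Bool,
    (∏ k : Fin K, condRkRef p x o k (r k))
      * ∏ k ∈ Finset.univ.filter (fun k : Fin K => k.val ≠ 0), ORk p x o r k

theorem term_eq_aux {K : ℕ} {𝒳 : Fin K → Type} {𝒪 : Type}
    (p : (∀ i, 𝒳 i) → 𝒪 → (Fin K → Bool) → ℝ)
    (hp : ∀ x o r, 0 < p x o r) (x : ∀ i, 𝒳 i) (o : 𝒪) (r : Fin K → Bool) :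
    (∏ k : Fin K, condRkRef p x o k (r k))
      * ∏ k ∈ Finset.univ.filter (fun k : Fin K => k.val ≠ 0), ORk p x o r k
    = ((∏ k : Fin K, condRkRef p x o k true) / p x o (fun _ => true)) * p x o r := by
  have hS : ∀ r k, 0 < ∑ b' : Bool, p x o (mixPat r k b') := fun r k =>
    Finset.sum_pos (fun b _ => hp _ _ _) Finset.univ_nonempty
  have hc : ∀ r k b, 0 < condRk p x o r k b := fun r k b => div_pos (hp _ _ _) (hS r k)
  have href : ∀ k b, condRkRef p x o k b = condRk p x o (fun _ => true) k b := by
    intro k b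
    have h : ∀ b, (fun j => if j = k then b else true) = mixPat (fun _ => true) k b := by
      intro b; funext j; unfold mixPat; split_ifs with h1 h2 <;> simp_all
    simp only [condRkRef, condRk, h]
  have hf : ∏ k ∈ Finset.univ.filter (fun k : Fin K => k.val ≠ 0), ORk p x o r k
      = ∏ k : Fin K, ORk p x o r k := by
    apply Finset.prod_filter_of_ne
    intro k _ hne h0
    apply hne
    have h : ∀ b, mixPat r k b = mixPat (fun _ => true) k b := by
      intro b; funext j
      have : ¬ j < k := by rw [Fin.lt_def]; omega
      simp [mixPat, this]
    have h2 : ∀ b, condRk p x o r k b = condRk p x o (fun _ => true) k b := by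
      intro b; simp only [condRk, h]
    rw [ORk, h2, h2]
    have := (hc (fun _ => true) k true).ne'
    have := (hc (fun _ => true) k (r k)).ne'
    field_simp
  let q : ℕ → ℝ := fun n => p x o (fun j => if j.val < n then r j else true)
  have hq : ∀ n, q n ≠ 0 := fun n => (hp _ _ _).ne'
  have hterm : ∀ k : Fin K, condRkRef p x o k (r k) * ORk p x o r k
      = condRkRef p x o k true * (q (k.val + 1) / q k.val) := by
    intro k
    have h1 : mixPat r k (r k) = fun j => if j.val < k.val + 1 then r j else true := by
      funext j; unfold mixPat
      rcases lt_trichotomy j k with h | h | h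
      · have h' : j.val < k.val + 1 := by rw [Fin.lt_def] at h; omega
        simp [h, h']
      · subst h; simp
      · have h' : ¬ j.val < k.val + 1 := by rw [Fin.lt_def] at h; omega
        simp [h.not_gt, h.ne', h']
    have h2 : mixPat r k true = fun j => if j.val < k.val then r j else true := by
      funext j; unfold mixPat; simp
    have h3 : condRk p x o r k (r k) / condRk p x o r k true = q (k.val + 1) / q k.val := by
      unfold condRk
      rw [div_div_div_cancel_right₀ (hS r k).ne', h1, h2]
    rw [ORk, h3, href, href]
    have := (hc (fun _ => true) k (r k)).ne'
    field_simp
  rw [hf, ← Finset.prod_mul_distrib, Finset.prod_congr rfl (fun k _ => hterm k),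
    Finset.prod_mul_distrib, Fin.prod_univ_eq_prod_range (fun n => q (n + 1) / q n) K]
  have htel : ∀ n, ∏ i ∈ Finset.range n, (q (i + 1) / q i) = q n / q 0 := by
    intro n
    induction n with
    | zero => simp [hq 0]
    | succ n ih =>
      rw [Finset.prod_range_succ, ih]
      have := hq n
      have := hq 0
      field_simp
  rw [htel]
  have e0 : q 0 = p x o (fun _ => true) := by simp [q]
  have eK : q K = p x o r := by simp [q]
  rw [e0, eK]
  ring

/-- Recursive odds ratio factorization of the missingness mechanism
`p(R = r | X = x, O = o)` with reference value `1` for each indicator. -/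
theorem odds_ratio_factorization_missingness
    (K : ℕ) (hK : 1 ≤ K)
    (𝒳 : Fin K → Type) [∀ i, Fintype (𝒳 i)] [∀ i, Nonempty (𝒳 i)]
    (𝒪 : Type) [Fintype 𝒪] [Nonempty 𝒪]
    (p : (∀ i, 𝒳 i) → 𝒪 → (Fin K → Bool) → ℝ)
    -- `p` is a strictly positive probability mass function (full law)
    (hp_pos : ∀ x o r, 0 < p x o r)
    (hp_sum : ∑ x : ∀ i, 𝒳 i, ∑ o : 𝒪, ∑ r : Fin K → Bool, p x o r = 1) :
    ∀ (r : Fin K → Bool) (x : ∀ i, 𝒳 i) (o : 𝒪),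
      p x o r / (∑ r' : Fin K → Bool, p x o r')
        = (1 / orZmiss p x o)
          * (∏ k : Fin K, condRkRef p x o k (r k))
          * ∏ k ∈ Finset.univ.filter (fun k : Fin K => k.val ≠ 0), ORk p x o r k := by
  intro r x o
  have hZ : orZmiss p x o = ((∏ k : Fin K, condRkRef p x o k true) / p x o (fun _ => true))
      * ∑ r' : Fin K → Bool, p x o r' := by
    rw [orZmiss, Finset.mul_sum]
    exact Finset.sum_congr rfl (fun r _ => term_eq_aux p hp_pos x o r)
  have hc : (∏ k : Fin K, condRkRef p x o k true) / p x o (fun _ => true) ≠ 0 := by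
    apply ne_of_gt
    apply div_pos _ (hp_pos _ _ _)
    apply Finset.prod_pos
    intro k _
    exact div_pos (hp_pos _ _ _)
      (Finset.sum_pos (fun b _ => hp_pos _ _ _) Finset.univ_nonempty)
  have hs : ∑ r' : Fin K → Bool, p x o r' ≠ 0 :=
    (Finset.sum_pos (fun b _ => hp_pos _ _ _) Finset.univ_nonempty).ne'
  rw [mul_assoc, term_eq_aux p hp_pos x o r, hZ]
  generalize (∏ k : Fin K, condRkRef p x o k true) / p x o (fun _ => true) = c at *
  field_simp
end

section
/- Let K = 3, let 𝒳_1, 𝒳_2, 𝒳_3 be nonempty finite sets, and let p be a strictly positive probability mass function on 𝒳_1 × 𝒳_2 × 𝒳_3 × {0,1}^3. Suppose the conditional independences X_1 ⊥ R_1 | X_2, X_3, R_2, R_3 and X_2 ⊥ R_2 | X_1, X_3, R_1, R_3 hold under p. Define OR(r_1, r_2 | R_3 = 1, x) = [p(R_1 = r_1 | R_2 = r_2, R_3 = 1, X = x)/p(R_1 = 1 | R_2 = r_2, R_3 = 1, X = x)] · [p(R_1 = 1 | R_2 = 1, R_3 = 1, X = x)/p(R_1 = r_1 | R_2 = 1,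 R_3 = 1, X = x)]. Then OR(r_1, r_2 | R_3 = 1, x) does not depend on the first two coordinates of x: for all r_1, r_2 and all x_1, x_1' ∈ 𝒳_1, x_2, x_2' ∈ 𝒳_2, x_3 ∈ 𝒳_3, OR(r_1, r_2 | R_3 = 1, (x_1, x_2, x_3)) = OR(r_1, r_2 | R_3 = 1, (x_1', x_2', x_3)). -/
/-- `OR(r_1, r_2 | R_3 = 1, x) = [p(R_1 = r_1 | R_2 = r_2, R_3 = 1, X = x)/
p(R_1 = 1 | R_2 = r_2, R_3 = 1, X = x)] · [p(R_1 = 1 | R_2 = 1, R_3 = 1, X = x)/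
p(R_1 = r_1 | R_2 = 1, R_3 = 1, X = x)]`. -/
noncomputable def OR12given3 {𝒳₁ 𝒳₂ 𝒳₃ : Type}
    (p : 𝒳₁ → 𝒳₂ → 𝒳₃ → Bool → Bool → Bool → ℝ)
    (x1 : 𝒳₁) (x2 : 𝒳₂) (x3 : 𝒳₃) (r1 r2 : Bool) : ℝ :=
  ((p x1 x2 x3 r1 r2 true / ∑ b : Bool, p x1 x2 x3 b r2 true)
      / (p x1 x2 x3 true r2 true / ∑ b : Bool, p x1 x2 x3 b r2 true))
    * ((p x1 x2 x3 true true true / ∑ b : Bool, p x1 x2 x3 b true true)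
      / (p x1 x2 x3 r1 true true / ∑ b : Bool, p x1 x2 x3 b true true))

/-- Cross-ratio identity from a factorization. -/
lemma cross_of_factor {S P Q U V a a' b b' : ℝ} (hS : S ≠ 0)
    (h1 : P / S = (a / S) * (b / S)) (h2 : Q / S = (a' / S) * (b' / S))
    (h3 : U / S = (a / S) * (b' / S)) (h4 : V / S = (a' / S) * (b / S)) :
    P * Q = U * V := by
  have h : (P / S) * (Q / S) = (U / S) * (V / S) := by
    rw [h1, h2, h3, h4]; ring
  rw [div_mul_div_comm, div_mul_div_comm] at h
  exact (div_left_inj' (mul_ne_zero hS hS)).1 h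

/-- Under strict positivity and the conditional independences
`X_1 ⊥ R_1 | X_2, X_3, R_2, R_3` and `X_2 ⊥ R_2 | X_1, X_3, R_1, R_3`, the odds ratio
`OR(r_1, r_2 | R_3 = 1, x)` does not depend on the first two coordinates of `x`. -/
theorem odds_ratio_not_function_of_x1_x2
    (𝒳₁ 𝒳₂ 𝒳₃ : Type) [Fintype 𝒳₁] [Fintype 𝒳₂] [Fintype 𝒳₃]
    [Nonempty 𝒳₁] [Nonempty 𝒳₂] [Nonempty 𝒳₃]
    (p : 𝒳₁ → 𝒳₂ → 𝒳₃ → Bool → Bool → Bool → ℝ)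
    -- `p` is a strictly positive probability mass function
    (hpos : ∀ x1 x2 x3 r1 r2 r3, 0 < p x1 x2 x3 r1 r2 r3)
    (hsum : ∑ x1 : 𝒳₁, ∑ x2 : 𝒳₂, ∑ x3 : 𝒳₃, ∑ r1 : Bool, ∑ r2 : Bool, ∑ r3 : Bool,
      p x1 x2 x3 r1 r2 r3 = 1)
    -- `X_1 ⊥ R_1 | X_2, X_3, R_2, R_3`
    (hCI1 : ∀ (x1 : 𝒳₁) (x2 : 𝒳₂) (x3 : 𝒳₃) (r1 r2 r3 : Bool),
      0 < (∑ y : 𝒳₁, ∑ b : Bool, p y x2 x3 b r2 r3) →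
      p x1 x2 x3 r1 r2 r3 / (∑ y : 𝒳₁, ∑ b : Bool, p y x2 x3 b r2 r3)
        = ((∑ b : Bool, p x1 x2 x3 b r2 r3)
            / (∑ y : 𝒳₁, ∑ b : Bool, p y x2 x3 b r2 r3))
          * ((∑ y : 𝒳₁, p y x2 x3 r1 r2 r3)
            / (∑ y : 𝒳₁, ∑ b : Bool, p y x2 x3 b r2 r3)))
    -- `X_2 ⊥ R_2 | X_1, X_3, R_1, R_3`
    (hCI2 : ∀ (x1 : 𝒳₁) (x2 : 𝒳₂) (x3 : 𝒳₃) (r1 r2 r3 : Bool),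
      0 < (∑ y : 𝒳₂, ∑ b : Bool, p x1 y x3 r1 b r3) →
      p x1 x2 x3 r1 r2 r3 / (∑ y : 𝒳₂, ∑ b : Bool, p x1 y x3 r1 b r3)
        = ((∑ b : Bool, p x1 x2 x3 r1 b r3)
            / (∑ y : 𝒳₂, ∑ b : Bool, p x1 y x3 r1 b r3))
          * ((∑ y : 𝒳₂, p x1 y x3 r1 r2 r3)
            / (∑ y : 𝒳₂, ∑ b : Bool, p x1 y x3 r1 b r3))) :
    ∀ (r1 r2 : Bool) (x1 x1' : 𝒳₁) (x2 x2' : 𝒳₂) (x3 : 𝒳₃),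
      OR12given3 p x1 x2 x3 r1 r2 = OR12given3 p x1' x2' x3 r1 r2 := by
  have c1 : ∀ x1 x1' x2 x3 r1 r2, p x1 x2 x3 r1 r2 true * p x1' x2 x3 true r2 true
      = p x1 x2 x3 true r2 true * p x1' x2 x3 r1 r2 true := by
    intro x1 x1' x2 x3 r1 r2
    have hS : 0 < (∑ y : 𝒳₁, ∑ b : Bool, p y x2 x3 b r2 true) :=
      Finset.sum_pos (fun y _ => Finset.sum_pos (fun b _ => hpos _ _ _ _ _ _)
        Finset.univ_nonempty) Finset.univ_nonempty
    exact cross_of_factor hS.ne' (hCI1 x1 x2 x3 r1 r2 true hS) (hCI1 x1' x2 x3 true r2 true hS)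
      (hCI1 x1 x2 x3 true r2 true hS) (hCI1 x1' x2 x3 r1 r2 true hS)
  have c2 : ∀ x1 x2 x2' x3 r1 r2, p x1 x2 x3 r1 r2 true * p x1 x2' x3 r1 true true
      = p x1 x2 x3 r1 true true * p x1 x2' x3 r1 r2 true := by
    intro x1 x2 x2' x3 r1 r2
    have hS : 0 < (∑ y : 𝒳₂, ∑ b : Bool, p x1 y x3 r1 b true) :=
      Finset.sum_pos (fun y _ => Finset.sum_pos (fun b _ => hpos _ _ _ _ _ _)
        Finset.univ_nonempty) Finset.univ_nonempty
    exact cross_of_factor hS.ne' (hCI2 x1 x2 x3 r1 r2 true hS) (hCI2 x1 x2' x3 r1 true true hS)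
      (hCI2 x1 x2 x3 r1 true true hS) (hCI2 x1 x2' x3 r1 r2 true hS)
  have e1 : ∀ x1 x2 x3 r1 r2, OR12given3 p x1 x2 x3 r1 r2
      = (p x1 x2 x3 r1 r2 true / p x1 x2 x3 true r2 true)
        * (p x1 x2 x3 true true true / p x1 x2 x3 r1 true true) := by
    intro x1 x2 x3 r1 r2
    have hS : ∀ r, (∑ b : Bool, p x1 x2 x3 b r true) ≠ 0 := fun r =>
      (Finset.sum_pos (fun b _ => hpos _ _ _ _ _ _) Finset.univ_nonempty).ne'
    unfold OR12given3
    rw [div_div_div_cancel_right₀ (hS r2), div_div_div_cancel_right₀ (hS true)]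
  have n : ∀ x1 x2 x3 r1 r2 r3, p x1 x2 x3 r1 r2 r3 ≠ 0 := fun _ _ _ _ _ _ => (hpos _ _ _ _ _ _).ne'
  intro r1 r2 x1 x1' x2 x2' x3
  rw [e1, e1]
  trans (p x1' x2 x3 r1 r2 true / p x1' x2 x3 true r2 true)
        * (p x1' x2 x3 true true true / p x1' x2 x3 r1 true true)
  · congr 1
    · rw [div_eq_div_iff (n _ _ _ _ _ _) (n _ _ _ _ _ _)]
      linarith [c1 x1 x1' x2 x3 r1 r2]
    · rw [div_eq_div_iff (n _ _ _ _ _ _) (n _ _ _ _ _ _)]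
      linarith [c1 x1 x1' x2 x3 r1 true]
  · rw [div_mul_div_comm, div_mul_div_comm, mul_comm (p x1' x2 x3 true r2 true),
      mul_comm (p x1' x2' x3 true r2 true), ← div_mul_div_comm, ← div_mul_div_comm]
    congr 1
    · rw [div_eq_div_iff (n _ _ _ _ _ _) (n _ _ _ _ _ _)]
      linarith [c2 x1' x2 x2' x3 r1 r2]
    · rw [div_eq_div_iff (n _ _ _ _ _ _) (n _ _ _ _ _ _)]
      linarith [c2 x1' x2 x2' x3 true r2]
end

section
/- Let K = 3, let 𝒳_1, 𝒳_2, 𝒳_3 be nonempty finite sets, and let p be a strictly positive probability mass function on 𝒳_1 × 𝒳_2 × 𝒳_3 × {0,1}^3 under which the three conditional independences X_i ⊥ R_i | X_{-i}, R_{-i} hold for i = 1, 2, 3. Define OR(r_1, r_2 | R_3 = r_3, x) = [p(R_1 = r_1 | R_2 = r_2, R_3 = r_3, X = x)/p(R_1 = 1 | R_2 = r_2, R_3 = r_3, X = x)] · [p(R_1 = 1 | R_2 = 1, R_3 = r_3, X = x)/p(R_1 = r_1 | R_2 = 1, R_3 = r_3, X = x)]. Then the three-way interaction term OR(r_1, r_2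 | R_3 = r_3, x)/OR(r_1, r_2 | R_3 = 1, x) does not depend on x: it takes the same value for all x ∈ 𝒳_1 × 𝒳_2 × 𝒳_3. -/
/-- `p(R_1 = b1 | R_2 = b2, R_3 = b3, X = x)`. -/
noncomputable def condR1 {𝒳₁ 𝒳₂ 𝒳₃ : Type}
    (p : 𝒳₁ → 𝒳₂ → 𝒳₃ → Bool → Bool → Bool → ℝ)
    (x1 : 𝒳₁) (x2 : 𝒳₂) (x3 : 𝒳₃) (b1 b2 b3 : Bool) : ℝ :=
  p x1 x2 x3 b1 b2 b3 / ∑ b : Bool, p x1 x2 x3 b b2 b3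

/-- `OR(r_1, r_2 | R_3 = r_3, x)`. -/
noncomputable def OR12 {𝒳₁ 𝒳₂ 𝒳₃ : Type}
    (p : 𝒳₁ → 𝒳₂ → 𝒳₃ → Bool → Bool → Bool → ℝ)
    (x1 : 𝒳₁) (x2 : 𝒳₂) (x3 : 𝒳₃) (r1 r2 r3 : Bool) : ℝ :=
  (condR1 p x1 x2 x3 r1 r2 r3 / condR1 p x1 x2 x3 true r2 r3)
    * (condR1 p x1 x2 x3 true true r3 / condR1 p x1 x2 x3 r1 true r3)

/-- A quantity factoring as in the conditional independence has ratios free of `x`. -/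
lemma ratio_aux {a b a2 b2 S U U2 V W : ℝ} (hS : 0 < S) (hb : 0 < b) (hb2 : 0 < b2)
    (h1 : a / S = U / S * (V / S)) (h2 : b / S = U / S * (W / S))
    (h3 : a2 / S = U2 / S * (V / S)) (h4 : b2 / S = U2 / S * (W / S)) :
    a / b = a2 / b2 := by
  rw [div_eq_div_iff hb.ne' hb2.ne']
  have h : (a / S) * (b2 / S) = (a2 / S) * (b / S) := by
    rw [h1, h2, h3, h4]; ring
  field_simp at h
  exact h

/-- The odds ratio in terms of joint probabilities. -/
lemma OR12_eq {𝒳₁ 𝒳₂ 𝒳₃ : Type}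
    (p : 𝒳₁ → 𝒳₂ → 𝒳₃ → Bool → Bool → Bool → ℝ)
    (hpos : ∀ x1 x2 x3 r1 r2 r3, 0 < p x1 x2 x3 r1 r2 r3)
    (x1 : 𝒳₁) (x2 : 𝒳₂) (x3 : 𝒳₃) (r1 r2 r3 : Bool) :
    OR12 p x1 x2 x3 r1 r2 r3 = (p x1 x2 x3 r1 r2 r3 / p x1 x2 x3 true r2 r3)
      * (p x1 x2 x3 true true r3 / p x1 x2 x3 r1 true r3) := by
  have hs : ∀ r2 r3, (∑ b : Bool, p x1 x2 x3 b r2 r3) ≠ 0 := fun r2 r3 =>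
    (Finset.sum_pos (fun b _ => hpos x1 x2 x3 b r2 r3) Finset.univ_nonempty).ne'
  unfold OR12 condR1
  rw [div_div_div_cancel_right₀ (hs _ _), div_div_div_cancel_right₀ (hs _ _)]

/-- Under strict positivity and the three itemwise conditional
independences `X_i ⊥ R_i | X_{-i}, R_{-i}`, the three-way interaction term
`OR(r_1, r_2 | R_3 = r_3, x) / OR(r_1, r_2 | R_3 = 1, x)` does not depend on `x`. -/
theorem three_way_interaction_identified
    (𝒳₁ 𝒳₂ 𝒳₃ : Type) [Fintype 𝒳₁] [Fintype 𝒳₂] [Fintype 𝒳₃]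
    [Nonempty 𝒳₁] [Nonempty 𝒳₂] [Nonempty 𝒳₃]
    (p : 𝒳₁ → 𝒳₂ → 𝒳₃ → Bool → Bool → Bool → ℝ)
    (hpos : ∀ x1 x2 x3 r1 r2 r3, 0 < p x1 x2 x3 r1 r2 r3)
    (hsum : ∑ x1 : 𝒳₁, ∑ x2 : 𝒳₂, ∑ x3 : 𝒳₃, ∑ r1 : Bool, ∑ r2 : Bool, ∑ r3 : Bool,
      p x1 x2 x3 r1 r2 r3 = 1)
    -- `X_1 ⊥ R_1 | X_2, X_3, R_2, R_3`
    (hCI1 : ∀ (x1 : 𝒳₁) (x2 : 𝒳₂) (x3 : 𝒳₃) (r1 r2 r3 : Bool),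
      0 < (∑ y : 𝒳₁, ∑ b : Bool, p y x2 x3 b r2 r3) →
      p x1 x2 x3 r1 r2 r3 / (∑ y : 𝒳₁, ∑ b : Bool, p y x2 x3 b r2 r3)
        = ((∑ b : Bool, p x1 x2 x3 b r2 r3)
            / (∑ y : 𝒳₁, ∑ b : Bool, p y x2 x3 b r2 r3))
          * ((∑ y : 𝒳₁, p y x2 x3 r1 r2 r3)
            / (∑ y : 𝒳₁, ∑ b : Bool, p y x2 x3 b r2 r3)))
    -- `X_2 ⊥ R_2 | X_1, X_3, R_1, R_3`
    (hCI2 : ∀ (x1 : 𝒳₁) (x2 : 𝒳₂) (x3 : 𝒳₃) (r1 r2 r3 : Bool),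
      0 < (∑ y : 𝒳₂, ∑ b : Bool, p x1 y x3 r1 b r3) →
      p x1 x2 x3 r1 r2 r3 / (∑ y : 𝒳₂, ∑ b : Bool, p x1 y x3 r1 b r3)
        = ((∑ b : Bool, p x1 x2 x3 r1 b r3)
            / (∑ y : 𝒳₂, ∑ b : Bool, p x1 y x3 r1 b r3))
          * ((∑ y : 𝒳₂, p x1 y x3 r1 r2 r3)
            / (∑ y : 𝒳₂, ∑ b : Bool, p x1 y x3 r1 b r3)))
    -- `X_3 ⊥ R_3 | X_1, X_2, R_1, R_2`
    (hCI3 : ∀ (x1 : 𝒳₁) (x2 : 𝒳₂) (x3 : 𝒳₃) (r1 r2 r3 : Bool),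
      0 < (∑ y : 𝒳₃, ∑ b : Bool, p x1 x2 y r1 r2 b) →
      p x1 x2 x3 r1 r2 r3 / (∑ y : 𝒳₃, ∑ b : Bool, p x1 x2 y r1 r2 b)
        = ((∑ b : Bool, p x1 x2 x3 r1 r2 b)
            / (∑ y : 𝒳₃, ∑ b : Bool, p x1 x2 y r1 r2 b))
          * ((∑ y : 𝒳₃, p x1 x2 y r1 r2 r3)
            / (∑ y : 𝒳₃, ∑ b : Bool, p x1 x2 y r1 r2 b))) :
    ∀ (r1 r2 r3 : Bool) (x1 y1 : 𝒳₁) (x2 y2 : 𝒳₂) (x3 y3 : 𝒳₃),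
      OR12 p x1 x2 x3 r1 r2 r3 / OR12 p x1 x2 x3 r1 r2 true
        = OR12 p y1 y2 y3 r1 r2 r3 / OR12 p y1 y2 y3 r1 r2 true := by
  intro r1 r2 r3 x1 y1 x2 y2 x3 y3
  have e1 : ∀ (x1 y1 : 𝒳₁) (x2 : 𝒳₂) (x3 : 𝒳₃) (r s r2 r3 : Bool),
      p x1 x2 x3 r r2 r3 / p x1 x2 x3 s r2 r3 = p y1 x2 x3 r r2 r3 / p y1 x2 x3 s r2 r3 := by
    intro x1 y1 x2 x3 r s r2 r3
    have hS : 0 < (∑ y : 𝒳₁, ∑ b : Bool, p y x2 x3 b r2 r3) :=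
      Finset.sum_pos (fun y _ => Finset.sum_pos (fun b _ => hpos _ _ _ _ _ _)
        Finset.univ_nonempty) Finset.univ_nonempty
    exact ratio_aux hS (hpos _ _ _ _ _ _) (hpos _ _ _ _ _ _)
      (hCI1 x1 x2 x3 r r2 r3 hS) (hCI1 x1 x2 x3 s r2 r3 hS)
      (hCI1 y1 x2 x3 r r2 r3 hS) (hCI1 y1 x2 x3 s r2 r3 hS)
  have e2 : ∀ (x1 : 𝒳₁) (x2 y2 : 𝒳₂) (x3 : 𝒳₃) (r1 r s r3 : Bool),
      p x1 x2 x3 r1 r r3 / p x1 x2 x3 r1 s r3 = p x1 y2 x3 r1 r r3 / p x1 y2 x3 r1 s r3 := by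
    intro x1 x2 y2 x3 r1 r s r3
    have hS : 0 < (∑ y : 𝒳₂, ∑ b : Bool, p x1 y x3 r1 b r3) :=
      Finset.sum_pos (fun y _ => Finset.sum_pos (fun b _ => hpos _ _ _ _ _ _)
        Finset.univ_nonempty) Finset.univ_nonempty
    exact ratio_aux hS (hpos _ _ _ _ _ _) (hpos _ _ _ _ _ _)
      (hCI2 x1 x2 x3 r1 r r3 hS) (hCI2 x1 x2 x3 r1 s r3 hS)
      (hCI2 x1 y2 x3 r1 r r3 hS) (hCI2 x1 y2 x3 r1 s r3 hS)
  have e3 : ∀ (x1 : 𝒳₁) (x2 : 𝒳₂) (x3 y3 : 𝒳₃) (r1 r2 r s : Bool),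
      p x1 x2 x3 r1 r2 r / p x1 x2 x3 r1 r2 s = p x1 x2 y3 r1 r2 r / p x1 x2 y3 r1 r2 s := by
    intro x1 x2 x3 y3 r1 r2 r s
    have hS : 0 < (∑ y : 𝒳₃, ∑ b : Bool, p x1 x2 y r1 r2 b) :=
      Finset.sum_pos (fun y _ => Finset.sum_pos (fun b _ => hpos _ _ _ _ _ _)
        Finset.univ_nonempty) Finset.univ_nonempty
    exact ratio_aux hS (hpos _ _ _ _ _ _) (hpos _ _ _ _ _ _)
      (hCI3 x1 x2 x3 r1 r2 r hS) (hCI3 x1 x2 x3 r1 r2 s hS)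
      (hCI3 x1 x2 y3 r1 r2 r hS) (hCI3 x1 x2 y3 r1 r2 s hS)
  simp only [OR12_eq p hpos]
  -- the interaction written as ratios in `r1`, then in `r2`, then in `r3`
  trans (p y1 x2 x3 r1 r2 r3 / p y1 x2 x3 true r2 r3
      * (p y1 x2 x3 true true r3 / p y1 x2 x3 r1 true r3)) /
      (p y1 x2 x3 r1 r2 true / p y1 x2 x3 true r2 true
      * (p y1 x2 x3 true true true / p y1 x2 x3 r1 true true))
  · rw [e1 x1 y1 x2 x3 r1 true r2 r3, e1 x1 y1 x2 x3 true r1 true r3,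
      e1 x1 y1 x2 x3 r1 true r2 true, e1 x1 y1 x2 x3 true r1 true true]
  have k2 : ∀ a b c d : ℝ, a / b * (c / d) = (a / d) * (c / b) := by
    intro a b c d; ring
  have k3 : ∀ a b c d a2 b2 c2 d2 : ℝ, (a / b * (c / d)) / (a2 / b2 * (c2 / d2))
      = (a / a2) * (c / c2) * (b2 / b) * (d2 / d) := by
    intro a b c d a2 b2 c2 d2
    simp only [div_eq_mul_inv, mul_inv, inv_inv]; ring
  trans (p y1 y2 x3 r1 r2 r3 / p y1 y2 x3 true r2 r3
      * (p y1 y2 x3 true true r3 / p y1 y2 x3 r1 true r3)) /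
      (p y1 y2 x3 r1 r2 true / p y1 y2 x3 true r2 true
      * (p y1 y2 x3 true true true / p y1 y2 x3 r1 true true))
  · rw [k2 (p y1 x2 x3 r1 r2 r3), k2 (p y1 x2 x3 r1 r2 true),
      k2 (p y1 y2 x3 r1 r2 r3), k2 (p y1 y2 x3 r1 r2 true),
      e2 y1 x2 y2 x3 r1 r2 true r3, e2 y1 x2 y2 x3 true true r2 r3,
      e2 y1 x2 y2 x3 r1 r2 true true, e2 y1 x2 y2 x3 true true r2 true]
  · rw [k3, k3, e3 y1 y2 x3 y3 r1 r2 r3 true, e3 y1 y2 x3 y3 true true r3 true,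
      e3 y1 y2 x3 y3 true r2 true r3, e3 y1 y2 x3 y3 r1 true true r3]
end

section
/- Let 𝒳_1, 𝒳_2 be nonempty finite sets and let p be a probability mass function on 𝒳_1 × 𝒳_2 × {0,1}^2 that factorizes as p(x_1, x_2, r_1, r_2) = μ(x_1, x_2)·f(r_1 | x_2)·g(r_2 | x_1), where μ is a strictly positive pmf on 𝒳_1 × 𝒳_2 and f(· | x_2), g(· | x_1) are conditional pmfs on {0,1}. If p(R = (1,0)) = 0, then p(R = (1,1)) = 0 or p(R = (0,0)) = 0. (The pattern R = 10 cannot have zero support in isolation if the full law factorizes according to this m-graph.) -/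
/-- If a full law factorizes as
`p(x1, x2, r1, r2) = μ(x1, x2) · f(r1 | x2) · g(r2 | x1)` with `μ` strictly positive,
then the pattern `R = 10` cannot have zero support in isolation: if `p(R = (1,0)) = 0`
then `p(R = (1,1)) = 0` or `p(R = (0,0)) = 0`. -/
theorem pattern_support_compatibility
    (𝒳₁ 𝒳₂ : Type) [Fintype 𝒳₁] [Fintype 𝒳₂] [Nonempty 𝒳₁] [Nonempty 𝒳₂]
    (p : 𝒳₁ → 𝒳₂ → Bool → Bool → ℝ)
    (μ : 𝒳₁ → 𝒳₂ → ℝ) (f : Bool → 𝒳₂ → ℝ) (g : Bool → 𝒳₁ → ℝ)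
    -- `μ` is a strictly positive pmf
    (hμ_pos : ∀ x1 x2, 0 < μ x1 x2)
    (hμ_sum : ∑ x1 : 𝒳₁, ∑ x2 : 𝒳₂, μ x1 x2 = 1)
    -- `f(· | x2)` and `g(· | x1)` are conditional pmfs on `{0,1}`
    (hf_nonneg : ∀ r1 x2, 0 ≤ f r1 x2)
    (hf_sum : ∀ x2, f false x2 + f true x2 = 1)
    (hg_nonneg : ∀ r2 x1, 0 ≤ g r2 x1)
    (hg_sum : ∀ x1, g false x1 + g true x1 = 1)
    -- the factorization of the full law
    (hfact : ∀ x1 x2 r1 r2, p x1 x2 r1 r2 = μ x1 x2 * f r1 x2 * g r2 x1)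
    -- `p(R = (1,0)) = 0`
    (h10 : ∑ x1 : 𝒳₁, ∑ x2 : 𝒳₂, p x1 x2 true false = 0) :
    (∑ x1 : 𝒳₁, ∑ x2 : 𝒳₂, p x1 x2 true true = 0)
      ∨ (∑ x1 : 𝒳₁, ∑ x2 : 𝒳₂, p x1 x2 false false = 0) := by
  have hp : ∀ x1 x2 r1 r2, 0 ≤ p x1 x2 r1 r2 := fun x1 x2 r1 r2 => by
    rw [hfact]
    exact mul_nonneg (mul_nonneg (hμ_pos x1 x2).le (hf_nonneg r1 x2)) (hg_nonneg r2 x1)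
  have key : ∀ x1 x2, f true x2 = 0 ∨ g false x1 = 0 := by
    intro x1 x2
    have h1 := (Finset.sum_eq_zero_iff_of_nonneg
      (fun a _ => Finset.sum_nonneg (fun b _ => hp a b true false))).1 h10 x1 (Finset.mem_univ _)
    have h2 := (Finset.sum_eq_zero_iff_of_nonneg
      (fun b _ => hp x1 b true false)).1 h1 x2 (Finset.mem_univ _)
    rw [hfact] at h2
    rcases mul_eq_zero.1 h2 with h | h
    · exact Or.inl ((mul_eq_zero.1 h).resolve_left (hμ_pos x1 x2).ne')
    · exact Or.inr h
  by_cases hf : ∀ x2, f true x2 = 0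
  · left
    simp [hfact, hf]
  · right
    obtain ⟨y, hy⟩ := not_forall.1 hf
    have hg : ∀ x1, g false x1 = 0 := fun x1 => (key x1 y).resolve_left hy
    simp [hfact, hg]
end

section
/- Let 𝒳_1, 𝒳_2 be nonempty finite sets and let p be a probability mass function on 𝒳_1 × 𝒳_2 × {0,1}^2 that factorizes as p(x_1, x_2, r_1, r_2) = μ(x_1, x_2)·f(r_1 | x_2)·g(r_2 | x_1), where μ is a strictly positive pmf on 𝒳_1 × 𝒳_2 and f(· | x_2), g(· | x_1) are conditional pmfs on {0,1}. If p(R = (1,0)) = 0 and p(R = (0,1)) = 0, then p(R = (1,1)) = 0 or p(R = (0,0)) = 0. (There is no such full law whose set of supported missingness patterns is exactly {11, 00}; i.e., ℛ⁺ = {11, 00} is not compatible with the factorization.) -/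
/-- If a full law factorizes as
`p(x1, x2, r1, r2) = μ(x1, x2) · f(r1 | x2) · g(r2 | x1)` with `μ` strictly positive,
and `p(R = (1,0)) = 0` and `p(R = (0,1)) = 0`,
then `p(R = (1,1)) = 0` or `p(R = (0,0)) = 0`; i.e. `ℛ⁺ = {11, 00}` is not compatible. -/
theorem no_support_exactly_11_00
    (𝒳₁ 𝒳₂ : Type) [Fintype 𝒳₁] [Fintype 𝒳₂] [Nonempty 𝒳₁] [Nonempty 𝒳₂]
    (p : 𝒳₁ → 𝒳₂ → Bool → Bool → ℝ)
    (μ : 𝒳₁ → 𝒳₂ → ℝ) (f : Bool → 𝒳₂ → ℝ) (g : Bool → 𝒳₁ → ℝ)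
    -- `μ` is a strictly positive pmf
    (hμ_pos : ∀ x1 x2, 0 < μ x1 x2)
    (hμ_sum : ∑ x1 : 𝒳₁, ∑ x2 : 𝒳₂, μ x1 x2 = 1)
    -- `f(· | x2)` and `g(· | x1)` are conditional pmfs on `{0,1}`
    (hf_nonneg : ∀ r1 x2, 0 ≤ f r1 x2)
    (hf_sum : ∀ x2, f false x2 + f true x2 = 1)
    (hg_nonneg : ∀ r2 x1, 0 ≤ g r2 x1)
    (hg_sum : ∀ x1, g false x1 + g true x1 = 1)
    -- the factorization of the full law
    (hfact : ∀ x1 x2 r1 r2, p x1 x2 r1 r2 = μ x1 x2 * f r1 x2 * g r2 x1)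
    -- `p(R = (1,0)) = 0`
    (h10 : ∑ x1 : 𝒳₁, ∑ x2 : 𝒳₂, p x1 x2 true false = 0)
    -- `p(R = (0,1)) = 0`
    (h01 : ∑ x1 : 𝒳₁, ∑ x2 : 𝒳₂, p x1 x2 false true = 0) :
    (∑ x1 : 𝒳₁, ∑ x2 : 𝒳₂, p x1 x2 true true = 0)
      ∨ (∑ x1 : 𝒳₁, ∑ x2 : 𝒳₂, p x1 x2 false false = 0) := by
  have hp : ∀ x1 x2 r1 r2, 0 ≤ p x1 x2 r1 r2 := fun x1 x2 r1 r2 => by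
    rw [hfact]
    exact mul_nonneg (mul_nonneg (hμ_pos x1 x2).le (hf_nonneg r1 x2)) (hg_nonneg r2 x1)
  have key : ∀ x1 x2, f true x2 = 0 ∨ g false x1 = 0 := by
    intro x1 x2
    have h1 := (Finset.sum_eq_zero_iff_of_nonneg
      (fun a _ => Finset.sum_nonneg (fun b _ => hp a b true false))).1 h10 x1 (Finset.mem_univ _)
    have h2 := (Finset.sum_eq_zero_iff_of_nonneg
      (fun b _ => hp x1 b true false)).1 h1 x2 (Finset.mem_univ _)
    rw [hfact, mul_assoc] at h2
    exact mul_eq_zero.1 ((mul_eq_zero.1 h2).resolve_left (hμ_pos x1 x2).ne')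
  by_cases h : ∀ x2, f true x2 = 0
  · left
    simp [hfact, h]
  · right
    obtain ⟨b, hb⟩ := not_forall.1 h
    have hg : ∀ x1, g false x1 = 0 := fun x1 => (key x1 b).resolve_left hb
    simp [hfact, hg]
end

section
/- Let 𝒳_1, 𝒳_2, 𝒳_3 be nonempty finite sets and let ℛ⁺ = {011, 101, 001, 010, 100, 000} ⊆ {0,1}^3 (so the patterns 111 and 110, including the complete case, have no support). Let p and q be probability mass functions on 𝒳_1 × 𝒳_2 × 𝒳_3 × {0,1}^3 such that, for both p and q: (i) p(X = x, R = r) > 0 for every x and every r ∈ ℛ⁺, and p(X = x, R = r) = 0 for r ∈ {111, 110}; (ii) the conditional independences X_1 ⊥ (X_2, X_3, R_1, R_2) | R_3, X_2 ⊥ (X_1, R_1, R_2, R_3) | X_3, and X_3 ⊥ (X_1, R_3) | X_2, R_1, R_2 hold. If, for every r ∈ ℛ⁺, every o, and every assignment x_{O(r)}, ∑_{x_{M(r)}} p(X = x, R = r) = ∑_{x_{M(r)}} q(X = x, R = r), then p = q. (Identification of the full law without any complete cases, via the PM-ID* argument of the appendix.) -/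
/-- The conditional independence `X_1 ⊥ (X_2, X_3, R_1, R_2) | R_3` for a pmf on
`𝒳₁ × 𝒳₂ × 𝒳₃ × {0,1}³`. -/
def CI_X1 {𝒳₁ 𝒳₂ 𝒳₃ : Type} [Fintype 𝒳₁] [Fintype 𝒳₂] [Fintype 𝒳₃]
    (p : 𝒳₁ → 𝒳₂ → 𝒳₃ → Bool → Bool → Bool → ℝ) : Prop :=
  ∀ (x1 : 𝒳₁) (x2 : 𝒳₂) (x3 : 𝒳₃) (r1 r2 r3 : Bool),
    0 < (∑ y1 : 𝒳₁, ∑ y2 : 𝒳₂, ∑ y3 : 𝒳₃, ∑ b1 : Bool, ∑ b2 : Bool,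
          p y1 y2 y3 b1 b2 r3) →
    p x1 x2 x3 r1 r2 r3
        / (∑ y1 : 𝒳₁, ∑ y2 : 𝒳₂, ∑ y3 : 𝒳₃, ∑ b1 : Bool, ∑ b2 : Bool,
            p y1 y2 y3 b1 b2 r3)
      = ((∑ y2 : 𝒳₂, ∑ y3 : 𝒳₃, ∑ b1 : Bool, ∑ b2 : Bool, p x1 y2 y3 b1 b2 r3)
          / (∑ y1 : 𝒳₁, ∑ y2 : 𝒳₂, ∑ y3 : 𝒳₃, ∑ b1 : Bool, ∑ b2 : Bool,
              p y1 y2 y3 b1 b2 r3))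
        * ((∑ y1 : 𝒳₁, p y1 x2 x3 r1 r2 r3)
          / (∑ y1 : 𝒳₁, ∑ y2 : 𝒳₂, ∑ y3 : 𝒳₃, ∑ b1 : Bool, ∑ b2 : Bool,
              p y1 y2 y3 b1 b2 r3))

/-- The conditional independence `X_2 ⊥ (X_1, R_1, R_2, R_3) | X_3`. -/
def CI_X2 {𝒳₁ 𝒳₂ 𝒳₃ : Type} [Fintype 𝒳₁] [Fintype 𝒳₂] [Fintype 𝒳₃]
    (p : 𝒳₁ → 𝒳₂ → 𝒳₃ → Bool → Bool → Bool → ℝ) : Prop :=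
  ∀ (x1 : 𝒳₁) (x2 : 𝒳₂) (x3 : 𝒳₃) (r1 r2 r3 : Bool),
    0 < (∑ y1 : 𝒳₁, ∑ y2 : 𝒳₂, ∑ b1 : Bool, ∑ b2 : Bool, ∑ b3 : Bool,
          p y1 y2 x3 b1 b2 b3) →
    p x1 x2 x3 r1 r2 r3
        / (∑ y1 : 𝒳₁, ∑ y2 : 𝒳₂, ∑ b1 : Bool, ∑ b2 : Bool, ∑ b3 : Bool,
            p y1 y2 x3 b1 b2 b3)
      = ((∑ y1 : 𝒳₁, ∑ b1 : Bool, ∑ b2 : Bool, ∑ b3 : Bool, p y1 x2 x3 b1 b2 b3)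
          / (∑ y1 : 𝒳₁, ∑ y2 : 𝒳₂, ∑ b1 : Bool, ∑ b2 : Bool, ∑ b3 : Bool,
              p y1 y2 x3 b1 b2 b3))
        * ((∑ y2 : 𝒳₂, p x1 y2 x3 r1 r2 r3)
          / (∑ y1 : 𝒳₁, ∑ y2 : 𝒳₂, ∑ b1 : Bool, ∑ b2 : Bool, ∑ b3 : Bool,
              p y1 y2 x3 b1 b2 b3))

/-- The conditional independence `X_3 ⊥ (X_1, R_3) | X_2, R_1, R_2`. -/
def CI_X3 {𝒳₁ 𝒳₂ 𝒳₃ : Type} [Fintype 𝒳₁] [Fintype 𝒳₂] [Fintype 𝒳₃]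
    (p : 𝒳₁ → 𝒳₂ → 𝒳₃ → Bool → Bool → Bool → ℝ) : Prop :=
  ∀ (x1 : 𝒳₁) (x2 : 𝒳₂) (x3 : 𝒳₃) (r1 r2 r3 : Bool),
    0 < (∑ y1 : 𝒳₁, ∑ y3 : 𝒳₃, ∑ b3 : Bool, p y1 x2 y3 r1 r2 b3) →
    p x1 x2 x3 r1 r2 r3
        / (∑ y1 : 𝒳₁, ∑ y3 : 𝒳₃, ∑ b3 : Bool, p y1 x2 y3 r1 r2 b3)
      = ((∑ y1 : 𝒳₁, ∑ b3 : Bool, p y1 x2 x3 r1 r2 b3)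
          / (∑ y1 : 𝒳₁, ∑ y3 : 𝒳₃, ∑ b3 : Bool, p y1 x2 y3 r1 r2 b3))
        * ((∑ y3 : 𝒳₃, p x1 x2 y3 r1 r2 r3)
          / (∑ y1 : 𝒳₁, ∑ y3 : 𝒳₃, ∑ b3 : Bool, p y1 x2 y3 r1 r2 b3))

/-- The factorisation `p = a(x₁ | r₃) g(x₂ | x₃) h(x₃, r)` implied by the independences. -/
theorem pm_factor
    (𝒳₁ 𝒳₂ 𝒳₃ : Type) [Fintype 𝒳₁] [Fintype 𝒳₂] [Fintype 𝒳₃]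
    [Nonempty 𝒳₁] [Nonempty 𝒳₂] [Nonempty 𝒳₃]
    (p : 𝒳₁ → 𝒳₂ → 𝒳₃ → Bool → Bool → Bool → ℝ)
    (hnn : ∀ x1 x2 x3 r1 r2 r3, 0 ≤ p x1 x2 x3 r1 r2 r3)
    (hpos : ∀ x1 x2 x3 r1 r2 r3, ¬(r1 = true ∧ r2 = true) → 0 < p x1 x2 x3 r1 r2 r3)
    (h1 : CI_X1 p) (h2 : CI_X2 p) (h3 : CI_X3 p) :
    ∃ (a : 𝒳₁ → Bool → ℝ) (g : 𝒳₂ → 𝒳₃ → ℝ) (h : 𝒳₃ → Bool → Bool → Bool → ℝ)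
      (c : Bool → Bool → ℝ),
      (∀ r3, ∑ x1, a x1 r3 = 1) ∧ (∀ x3, ∑ x2, g x2 x3 = 1) ∧
      (∀ x1 x2 x3 r1 r2 r3, p x1 x2 x3 r1 r2 r3 = a x1 r3 * (g x2 x3 * h x3 r1 r2 r3)) ∧
      (∀ x3 r1 r2 r3, ¬(r1 = true ∧ r2 = true) → 0 < h x3 r1 r2 r3) ∧
      (∀ x3 r1 r2, ¬(r1 = true ∧ r2 = true) →
        h x3 r1 r2 false = c r1 r2 * h x3 r1 r2 true) := by
  have hS : ∀ r3, 0 < (∑ y1 : 𝒳₁, ∑ y2 : 𝒳₂, ∑ y3 : 𝒳₃, ∑ b1 : Bool, ∑ b2 : Bool,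
          p y1 y2 y3 b1 b2 r3) := by
    intro r3
    refine Finset.sum_pos (fun y1 _ => Finset.sum_pos (fun y2 _ => Finset.sum_pos
      (fun y3 _ => ?_) Finset.univ_nonempty) Finset.univ_nonempty) Finset.univ_nonempty
    simp only [Fintype.sum_bool]
    linarith [hnn y1 y2 y3 true true r3, hnn y1 y2 y3 true false r3, hnn y1 y2 y3 false true r3,
      hpos y1 y2 y3 false false r3 (by simp)]
  have hb : ∀ y1 y2 x3, 0 < ∑ b1 : Bool, ∑ b2 : Bool, ∑ b3 : Bool, p y1 y2 x3 b1 b2 b3 := by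
    intro y1 y2 x3
    simp only [Fintype.sum_bool]
    linarith [hnn y1 y2 x3 true true true, hnn y1 y2 x3 true false true,
      hnn y1 y2 x3 false true true, hnn y1 y2 x3 true true false, hnn y1 y2 x3 true false false,
      hnn y1 y2 x3 false true false, hnn y1 y2 x3 false false true,
      hpos y1 y2 x3 false false false (by simp)]
  have hT : ∀ x3, 0 < (∑ y1 : 𝒳₁, ∑ y2 : 𝒳₂, ∑ b1 : Bool, ∑ b2 : Bool, ∑ b3 : Bool,
          p y1 y2 x3 b1 b2 b3) := fun x3 =>
    Finset.sum_pos (fun y1 _ => Finset.sum_pos (fun y2 _ => hb y1 y2 x3)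
      Finset.univ_nonempty) Finset.univ_nonempty
  have hD : ∀ x2 r1 r2, ¬(r1 = true ∧ r2 = true) →
      0 < (∑ y1 : 𝒳₁, ∑ y3 : 𝒳₃, ∑ b3 : Bool, p y1 x2 y3 r1 r2 b3) := fun x2 r1 r2 hr =>
    Finset.sum_pos (fun y1 _ => Finset.sum_pos (fun y3 _ => Finset.sum_pos
      (fun b3 _ => hpos _ _ _ _ _ _ hr)
      Finset.univ_nonempty) Finset.univ_nonempty) Finset.univ_nonempty
  obtain ⟨a, ha, ha1⟩ : ∃ a : 𝒳₁ → Bool → ℝ, (∀ x1 x2 x3 r1 r2 r3, p x1 x2 x3 r1 r2 r3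
      = a x1 r3 * ∑ y1, p y1 x2 x3 r1 r2 r3) ∧ ∀ r3, ∑ x1, a x1 r3 = 1 := by
    refine ⟨fun x1 r3 => (∑ y2 : 𝒳₂, ∑ y3 : 𝒳₃, ∑ b1 : Bool, ∑ b2 : Bool, p x1 y2 y3 b1 b2 r3)
          / (∑ y1 : 𝒳₁, ∑ y2 : 𝒳₂, ∑ y3 : 𝒳₃, ∑ b1 : Bool, ∑ b2 : Bool,
              p y1 y2 y3 b1 b2 r3), ?_, ?_⟩
    · intro x1 x2 x3 r1 r2 r3
      have := h1 x1 x2 x3 r1 r2 r3 (hS r3)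
      rw [← mul_div_assoc] at this
      exact (div_left_inj' (hS r3).ne').1 this
    · intro r3
      simp only []
      rw [← Finset.sum_div, div_self (hS r3).ne']
  obtain ⟨g, hg, hg1⟩ : ∃ g : 𝒳₂ → 𝒳₃ → ℝ, (∀ x1 x2 x3 r1 r2 r3, p x1 x2 x3 r1 r2 r3
      = g x2 x3 * ∑ y2, p x1 y2 x3 r1 r2 r3) ∧ ∀ x3, ∑ x2, g x2 x3 = 1 := by
    refine ⟨fun x2 x3 =>
      (∑ y1 : 𝒳₁, ∑ b1 : Bool, ∑ b2 : Bool, ∑ b3 : Bool, p y1 x2 x3 b1 b2 b3)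
          / (∑ y1 : 𝒳₁, ∑ y2 : 𝒳₂, ∑ b1 : Bool, ∑ b2 : Bool, ∑ b3 : Bool,
              p y1 y2 x3 b1 b2 b3), ?_, ?_⟩
    · intro x1 x2 x3 r1 r2 r3
      have := h2 x1 x2 x3 r1 r2 r3 (hT x3)
      rw [← mul_div_assoc] at this
      exact (div_left_inj' (hT x3).ne').1 this
    · intro x3
      simp only []
      rw [← Finset.sum_div, Finset.sum_comm, div_self (hT x3).ne']
  have hfac : ∀ x1 x2 x3 r1 r2 r3, p x1 x2 x3 r1 r2 r3
      = a x1 r3 * (g x2 x3 * ∑ y1, ∑ y2, p y1 y2 x3 r1 r2 r3) := by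
    intro x1 x2 x3 r1 r2 r3
    rw [ha x1 x2 x3 r1 r2 r3]
    congr 1
    rw [Finset.mul_sum]
    exact Finset.sum_congr rfl fun y1 _ => hg y1 x2 x3 r1 r2 r3
  have hH : ∀ x3 r1 r2 r3, ¬(r1 = true ∧ r2 = true) →
      0 < ∑ y1, ∑ y2, p y1 y2 x3 r1 r2 r3 := fun x3 r1 r2 r3 hr =>
    Finset.sum_pos (fun y1 _ => Finset.sum_pos (fun y2 _ => hpos _ _ _ _ _ _ hr)
      Finset.univ_nonempty) Finset.univ_nonempty
  obtain ⟨x1⟩ := ‹Nonempty 𝒳₁›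
  obtain ⟨x2⟩ := ‹Nonempty 𝒳₂›
  refine ⟨a, g, fun x3 r1 r2 r3 => ∑ y1, ∑ y2, p y1 y2 x3 r1 r2 r3,
    fun r1 r2 => a x1 true * (∑ y3, p x1 x2 y3 r1 r2 false)
      / (a x1 false * (∑ y3, p x1 x2 y3 r1 r2 true)), ha1, hg1, hfac, hH, ?_⟩
  intro x3 r1 r2 hr
  have hV : ∀ r3, 0 < ∑ y3, p x1 x2 y3 r1 r2 r3 := fun r3 =>
    Finset.sum_pos (fun y3 _ => hpos _ _ _ _ _ _ hr) Finset.univ_nonempty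
  have key : ∀ r3, p x1 x2 x3 r1 r2 r3 *
      (∑ y1 : 𝒳₁, ∑ y3 : 𝒳₃, ∑ b3 : Bool, p y1 x2 y3 r1 r2 b3)
      = (∑ y1 : 𝒳₁, ∑ b3 : Bool, p y1 x2 x3 r1 r2 b3) * ∑ y3, p x1 x2 y3 r1 r2 r3 := by
    intro r3
    have := h3 x1 x2 x3 r1 r2 r3 (hD x2 r1 r2 hr)
    have hne := (hD x2 r1 r2 hr).ne'
    rw [← mul_div_assoc] at this
    have := (div_left_inj' hne).1 this
    rw [div_mul_eq_mul_div, eq_div_iff hne] at this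
    exact this
  have kf := key false
  have kt := key true
  have pf := hpos x1 x2 x3 r1 r2 false hr
  have pt := hpos x1 x2 x3 r1 r2 true hr
  have ef := hfac x1 x2 x3 r1 r2 false
  have et := hfac x1 x2 x3 r1 r2 true
  have Vf := hV false
  have Vt := hV true
  have Dp := hD x2 r1 r2 hr
  simp only []
  generalize (∑ y1, ∑ y2, p y1 y2 x3 r1 r2 false) = Hf at *
  generalize (∑ y1, ∑ y2, p y1 y2 x3 r1 r2 true) = Ht at *
  generalize (∑ y3, p x1 x2 y3 r1 r2 false) = vf at *
  generalize (∑ y3, p x1 x2 y3 r1 r2 true) = vt at *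
  generalize (∑ y1 : 𝒳₁, ∑ y3 : 𝒳₃, ∑ b3 : Bool, p y1 x2 y3 r1 r2 b3) = D at *
  generalize (∑ y1 : 𝒳₁, ∑ b3 : Bool, p y1 x2 x3 r1 r2 b3) = U at *
  rw [ef] at kf pf
  rw [et] at kt pt
  have naf : a x1 false ≠ 0 := fun h0 => by simp [h0] at pf
  have ng : g x2 x3 ≠ 0 := fun h0 => by simp [h0] at pf
  have e : (a x1 false * (g x2 x3 * Hf)) * vt = (a x1 true * (g x2 x3 * Ht)) * vf := by
    apply mul_right_cancel₀ Dp.ne'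
    linear_combination vt * kf - vf * kt
  have e2 : a x1 false * Hf * vt = a x1 true * Ht * vf := by
    apply mul_left_cancel₀ ng
    linear_combination e
  rw [div_mul_eq_mul_div, eq_div_iff (mul_ne_zero naf Vt.ne')]
  linear_combination e2

/-- Identification of the full law without any complete cases (PM-ID*):
with support exactly on `ℛ⁺ = {011, 101, 001, 010, 100, 000}` (no support on `111` or
`110`), the stated conditional independences, and equal observed laws, the two full
laws coincide. -/
theorem pm_id_star_no_complete_cases
    (𝒳₁ 𝒳₂ 𝒳₃ : Type) [Fintype 𝒳₁] [Fintype 𝒳₂] [Fintype 𝒳₃]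
    [Nonempty 𝒳₁] [Nonempty 𝒳₂] [Nonempty 𝒳₃]
    (p q : 𝒳₁ → 𝒳₂ → 𝒳₃ → Bool → Bool → Bool → ℝ)
    -- `p` and `q` are probability mass functions
    (hp_nonneg : ∀ x1 x2 x3 r1 r2 r3, 0 ≤ p x1 x2 x3 r1 r2 r3)
    (hp_sum : ∑ x1 : 𝒳₁, ∑ x2 : 𝒳₂, ∑ x3 : 𝒳₃, ∑ r1 : Bool, ∑ r2 : Bool, ∑ r3 : Bool,
      p x1 x2 x3 r1 r2 r3 = 1)
    (hq_nonneg : ∀ x1 x2 x3 r1 r2 r3, 0 ≤ q x1 x2 x3 r1 r2 r3)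
    (hq_sum : ∑ x1 : 𝒳₁, ∑ x2 : 𝒳₂, ∑ x3 : 𝒳₃, ∑ r1 : Bool, ∑ r2 : Bool, ∑ r3 : Bool,
      q x1 x2 x3 r1 r2 r3 = 1)
    -- (i) positivity on `ℛ⁺` (all patterns except 111 and 110) and zero elsewhere
    (hp_pos : ∀ x1 x2 x3 r1 r2 r3, ¬(r1 = true ∧ r2 = true) → 0 < p x1 x2 x3 r1 r2 r3)
    (hq_pos : ∀ x1 x2 x3 r1 r2 r3, ¬(r1 = true ∧ r2 = true) → 0 < q x1 x2 x3 r1 r2 r3)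
    (hp_zero : ∀ x1 x2 x3 r3, p x1 x2 x3 true true r3 = 0)
    (hq_zero : ∀ x1 x2 x3 r3, q x1 x2 x3 true true r3 = 0)
    -- (ii) the conditional independences hold under both `p` and `q`
    (hCI1p : CI_X1 p) (hCI1q : CI_X1 q)
    (hCI2p : CI_X2 p) (hCI2q : CI_X2 q)
    (hCI3p : CI_X3 p) (hCI3q : CI_X3 q)
    -- the observed laws agree on every pattern in `ℛ⁺`
    (hobs011 : ∀ x2 x3, (∑ x1 : 𝒳₁, p x1 x2 x3 false true true)
      = ∑ x1 : 𝒳₁, q x1 x2 x3 false true true)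
    (hobs101 : ∀ x1 x3, (∑ x2 : 𝒳₂, p x1 x2 x3 true false true)
      = ∑ x2 : 𝒳₂, q x1 x2 x3 true false true)
    (hobs001 : ∀ x3, (∑ x1 : 𝒳₁, ∑ x2 : 𝒳₂, p x1 x2 x3 false false true)
      = ∑ x1 : 𝒳₁, ∑ x2 : 𝒳₂, q x1 x2 x3 false false true)
    (hobs010 : ∀ x2, (∑ x1 : 𝒳₁, ∑ x3 : 𝒳₃, p x1 x2 x3 false true false)
      = ∑ x1 : 𝒳₁, ∑ x3 : 𝒳₃, q x1 x2 x3 false true false)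
    (hobs100 : ∀ x1, (∑ x2 : 𝒳₂, ∑ x3 : 𝒳₃, p x1 x2 x3 true false false)
      = ∑ x2 : 𝒳₂, ∑ x3 : 𝒳₃, q x1 x2 x3 true false false)
    (hobs000 : (∑ x1 : 𝒳₁, ∑ x2 : 𝒳₂, ∑ x3 : 𝒳₃, p x1 x2 x3 false false false)
      = ∑ x1 : 𝒳₁, ∑ x2 : 𝒳₂, ∑ x3 : 𝒳₃, q x1 x2 x3 false false false) :
    ∀ x1 x2 x3 r1 r2 r3, p x1 x2 x3 r1 r2 r3 = q x1 x2 x3 r1 r2 r3 := by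
  obtain ⟨a, g, h, c, ha, hg, hfac, hh, hc⟩ :=
    pm_factor 𝒳₁ 𝒳₂ 𝒳₃ p hp_nonneg hp_pos hCI1p hCI2p hCI3p
  obtain ⟨a', g', h', c', ha', hg', hfac', hh', hc'⟩ :=
    pm_factor 𝒳₁ 𝒳₂ 𝒳₃ q hq_nonneg hq_pos hCI1q hCI2q hCI3q
  simp only [hfac, hfac', ← Finset.sum_mul, ← Finset.mul_sum, ha, ha', hg, hg', one_mul]
    at hobs011 hobs101 hobs001 hobs010 hobs100 hobs000
  have e011 : ∀ x3, h x3 false true true = h' x3 false true true := by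
    intro x3
    have := Finset.sum_congr rfl fun x2 (_ : x2 ∈ Finset.univ) => hobs011 x2 x3
    simpa only [← Finset.sum_mul, hg, hg', one_mul] using this
  have eg : ∀ x2 x3, g x2 x3 = g' x2 x3 := by
    intro x2 x3
    have := hobs011 x2 x3
    rw [← e011] at this
    exact mul_right_cancel₀ (hh x3 false true true (by simp)).ne' this
  have e101 : ∀ x3, h x3 true false true = h' x3 true false true := by
    intro x3
    have := Finset.sum_congr rfl fun x1 (_ : x1 ∈ Finset.univ) => hobs101 x1 x3
    simpa only [← Finset.sum_mul, ha, ha', one_mul] using this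
  obtain ⟨z3⟩ := id ‹Nonempty 𝒳₃›
  have eat : ∀ x1, a x1 true = a' x1 true := by
    intro x1
    have := hobs101 x1 z3
    rw [← e101] at this
    exact mul_right_cancel₀ (hh z3 true false true (by simp)).ne' this
  have t010 : ∑ x3, h x3 false true false = ∑ x3, h' x3 false true false := by
    have := Finset.sum_congr rfl fun x2 (_ : x2 ∈ Finset.univ) => hobs010 x2
    rw [Finset.sum_comm, Finset.sum_comm (f := fun x2 x3 => g' x2 x3 * h' x3 false true false)]
      at this
    simpa only [← Finset.sum_mul, hg, hg', one_mul] using this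
  have E100 : ∀ x1, a x1 false * ∑ x3, h x3 true false false
      = a' x1 false * ∑ x3, h' x3 true false false := by
    intro x1
    have := hobs100 x1
    rw [Finset.sum_comm, Finset.sum_comm (f := fun x2 x3 => g' x2 x3 * h' x3 true false false)]
      at this
    simpa only [← Finset.sum_mul, hg, hg', one_mul] using this
  have t100 : ∑ x3, h x3 true false false = ∑ x3, h' x3 true false false := by
    have := Finset.sum_congr rfl fun x1 (_ : x1 ∈ Finset.univ) => E100 x1
    simpa only [← Finset.sum_mul, ha, ha', one_mul] using this
  have eaf : ∀ x1, a x1 false = a' x1 false := by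
    intro x1
    have := E100 x1
    rw [← t100] at this
    exact mul_right_cancel₀ (Finset.sum_pos (fun x3 _ => hh x3 true false false (by simp))
      Finset.univ_nonempty).ne' this
  have t000 : ∑ x3, h x3 false false false = ∑ x3, h' x3 false false false := by
    have := hobs000
    rw [Finset.sum_comm, Finset.sum_comm (f := fun x2 x3 => g' x2 x3 * h' x3 false false false)]
      at this
    simpa only [← Finset.sum_mul, hg, hg', one_mul] using this
  have fin : ∀ r1 r2, ¬(r1 = true ∧ r2 = true) → (∀ x3, h x3 r1 r2 true = h' x3 r1 r2 true) →
      (∑ x3, h x3 r1 r2 false = ∑ x3, h' x3 r1 r2 false) →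
      ∀ x3 r3, h x3 r1 r2 r3 = h' x3 r1 r2 r3 := by
    intro r1 r2 hr et es x3 r3
    cases r3 with
    | true => exact et x3
    | false =>
      have hcc : c r1 r2 = c' r1 r2 := by
        rw [Finset.sum_congr rfl fun x3 _ => hc x3 r1 r2 hr,
          Finset.sum_congr rfl fun x3 _ => hc' x3 r1 r2 hr, ← Finset.mul_sum, ← Finset.mul_sum,
          ← Finset.sum_congr rfl fun x3 _ => et x3] at es
        exact mul_right_cancel₀ (Finset.sum_pos (fun x3 _ => hh x3 r1 r2 true hr)
          Finset.univ_nonempty).ne' es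
      rw [hc x3 r1 r2 hr, hc' x3 r1 r2 hr, hcc, et]
  have ea : ∀ x1 r3, a x1 r3 = a' x1 r3 := by
    intro x1 r3
    cases r3 with
    | true => exact eat x1
    | false => exact eaf x1
  intro x1 x2 x3 r1 r2 r3
  by_cases hr : r1 = true ∧ r2 = true
  · obtain ⟨rfl, rfl⟩ := hr
    rw [hp_zero, hq_zero]
  · rw [hfac, hfac', ea, eg]
    congr 2
    revert r1 r2
    rintro (_ | _) (_ | _) hr
    · exact fin _ _ (by simp) hobs001 t000 x3 r3
    · exact fin _ _ (by simp) e011 t010 x3 r3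
    · exact fin _ _ (by simp) e101 t100 x3 r3
    · simp at hr
end

section
/- Let 𝒳_1, 𝒳_2, 𝒳_3 be nonempty finite sets and let p be a strictly positive probability mass function on 𝒳_1 × 𝒳_2 × 𝒳_3 × {0,1}^3 under which the conditional independence X_3 ⊥ R_3 | X_1, X_2, R_1, R_2 holds. Then for all x_1, x_2, x_3: p(X = (x_1, x_2, x_3), R = (1,1,0)) = p(X_3 = x_3 | X_1 = x_1, X_2 = x_2, R = (1,1,1)) · ∑_{x_3'} p(X = (x_1, x_2, x_3'), R = (1,1,0)). (Explicit pattern mixture identification of the pattern R = 110 from the complete cases, as in the PM-ID worked example.) -/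
/-- Explicit pattern mixture identification of the pattern `R = 110`
from the complete cases: under strict positivity and
`X_3 ⊥ R_3 | X_1, X_2, R_1, R_2`, the joint at `R = (1,1,0)` equals the complete-case
conditional of `X_3` times the margin of the pattern. -/
theorem pm_id_pattern_110_from_complete_cases
    (𝒳₁ 𝒳₂ 𝒳₃ : Type) [Fintype 𝒳₁] [Fintype 𝒳₂] [Fintype 𝒳₃]
    [Nonempty 𝒳₁] [Nonempty 𝒳₂] [Nonempty 𝒳₃]
    (p : 𝒳₁ → 𝒳₂ → 𝒳₃ → Bool → Bool → Bool → ℝ)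
    -- `p` is a strictly positive probability mass function
    (hpos : ∀ x1 x2 x3 r1 r2 r3, 0 < p x1 x2 x3 r1 r2 r3)
    (hsum : ∑ x1 : 𝒳₁, ∑ x2 : 𝒳₂, ∑ x3 : 𝒳₃, ∑ r1 : Bool, ∑ r2 : Bool, ∑ r3 : Bool,
      p x1 x2 x3 r1 r2 r3 = 1)
    -- `X_3 ⊥ R_3 | X_1, X_2, R_1, R_2`
    (hCI : ∀ (x1 : 𝒳₁) (x2 : 𝒳₂) (x3 : 𝒳₃) (r1 r2 r3 : Bool),
      0 < (∑ y : 𝒳₃, ∑ b : Bool, p x1 x2 y r1 r2 b) →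
      p x1 x2 x3 r1 r2 r3 / (∑ y : 𝒳₃, ∑ b : Bool, p x1 x2 y r1 r2 b)
        = ((∑ b : Bool, p x1 x2 x3 r1 r2 b)
            / (∑ y : 𝒳₃, ∑ b : Bool, p x1 x2 y r1 r2 b))
          * ((∑ y : 𝒳₃, p x1 x2 y r1 r2 r3)
            / (∑ y : 𝒳₃, ∑ b : Bool, p x1 x2 y r1 r2 b))) :
    ∀ (x1 : 𝒳₁) (x2 : 𝒳₂) (x3 : 𝒳₃),
      p x1 x2 x3 true true false
        = (p x1 x2 x3 true true true / ∑ y : 𝒳₃, p x1 x2 y true true true)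
          * ∑ y : 𝒳₃, p x1 x2 y true true false := by
  intro x1 x2 x3
  have hD : 0 < ∑ y : 𝒳₃, ∑ b : Bool, p x1 x2 y true true b :=
    Finset.sum_pos (fun y _ => Finset.sum_pos (fun b _ => hpos _ _ _ _ _ _)
      Finset.univ_nonempty) Finset.univ_nonempty
  have hS : 0 < ∑ y : 𝒳₃, p x1 x2 y true true true :=
    Finset.sum_pos (fun y _ => hpos _ _ _ _ _ _) Finset.univ_nonempty
  have h1 := hCI x1 x2 x3 true true true hD
  have h0 := hCI x1 x2 x3 true true false hD
  generalize (∑ y : 𝒳₃, ∑ b : Bool, p x1 x2 y true true b) = D at *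
  generalize (∑ b : Bool, p x1 x2 x3 true true b) = M at *
  generalize (∑ y : 𝒳₃, p x1 x2 y true true true) = S at *
  generalize (∑ y : 𝒳₃, p x1 x2 y true true false) = T at *
  have hD' := hD.ne'
  have e1 : p x1 x2 x3 true true true = M * S / D := by
    rw [div_eq_iff hD'] at h1
    rw [h1]
    field_simp
  have e0 : p x1 x2 x3 true true false = M * T / D := by
    rw [div_eq_iff hD'] at h0
    rw [h0]
    field_simp
  have hS' := hS.ne'
  rw [e1, e0]
  field_simp
end
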